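/- arXiv:1805.01878 — 3 statements merged into one kernel-verified Lean document; each statement's English description precedes it below -/
import Mathlib

section
/- For each fixed cut-off value u_c in (0,1) and each KPP reaction function f, there exists a speed v > 0 and a function U_T : ℝ → ℝ, continuously differentiable on ℝ and twice continuously differentiable on ℝ \ {0}, such that U_T''(y) + v U_T'(y) + f_c(U_T(y)) = 0 for all y ≠ 0, U_T(0) = u_c, u_c ≤ U_T(y) ≤ 1 for all y < 0, 0 ≤ U_T(y) ≤ u_c for all y > 0, U_T(y) → 1 as y → −∞, and U_T(y) → 0 as y → +∞. That is, a permanent form travelling wave solution with cut-off u_c exists. -/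
/-!
In the phase plane the wave becomes a first-order problem. If `U` is decreasing, write `U' = -P(U)`;
the equation reads `P' = v - f_c(u) / P`. Below the cut-off the solution vanishing at `u = 0` is
`P = v u`, so it remains to find `v > 0` and a solution of `P' = v - f / P` on `[uc, 1]` with
`P(1) = 0`, `P > 0` on `[uc, 1)` and `P(uc) = v uc`.

With `t = 1 - u`, `g(t) = f(1 - t)` and `ρ = P²` the singular equation becomes
`ρ' = 2 (g - v √ρ)`, `ρ(0) = 0`. The right-hand side is continuous and nonincreasing in `ρ`, so
differences of solutions do not grow. Replacing `√ρ` by the Lipschitz function `√(max ρ ε²)` changes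
the equation by `O(ε)`; hence the regularized solutions, given by Picard-Lindelöf, converge
uniformly as `ε → 0`, and the limit solves the singular equation (`exists_sqrt_ode`). The same
comparison principle (`fencing`) gives `(k g)² ≤ ρ ≤ M t²`, where `M` bounds `|f'|` on `[0, 1]` and
`k > 0` is small, and shows that `ρ` is Lipschitz in `v`. The function `v ↦ ρ_v(1 - uc) - (v uc)²`
is positive at `v = 0` and negative for `v = (M + 1) / uc`, so it vanishes for some `v > 0`
(`exists_speed`).

Finally `P` is continuous and positive on `(0, 1)` with `P(u) ≤ K u (1 - u)`. Therefore `∫ du / P`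
diverges at both ends, and inverting this integral yields a global solution of `U' = -P(U)` joining
`1` to `0` (`exists_profile`). It is strictly decreasing, so it crosses `uc` only at `y = 0`, and
away from that point `P` is `C¹`, which makes `U` twice continuously differentiable.
-/

open Real Filter Topology

/-- A KPP reaction function: `f ∈ C¹`, `f 0 = f 1 = 0`, `f' 0 = 1`, `f' 1 < 0`,
`0 < f u ≤ u` on `(0,1)` and `f u < 0` for `u > 1`. -/
def IsKPP (f : ℝ → ℝ) : Prop :=
  ContDiff ℝ 1 f ∧ f 0 = 0 ∧ f 1 = 0 ∧ deriv f 0 = 1 ∧ deriv f 1 < 0 ∧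
  (∀ u : ℝ, 0 < u → u < 1 → 0 < f u ∧ f u ≤ u) ∧
  (∀ u : ℝ, 1 < u → f u < 0)

/-- The cut-off reaction function: `f_c u = f u` for `u > u_c`, and `0` for `u ≤ u_c`. -/
noncomputable def cutoff (f : ℝ → ℝ) (uc : ℝ) : ℝ → ℝ :=
  fun u => if uc < u then f u else 0

/-- A permanent form travelling wave solution with cut-off `uc` and speed `v`. -/
def IsPTW (f : ℝ → ℝ) (uc v : ℝ) (U : ℝ → ℝ) : Prop :=
  ContDiff ℝ 1 U ∧
  (∀ y : ℝ, y ≠ 0 → ContDiffAt ℝ 2 U y) ∧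
  (∀ y : ℝ, y ≠ 0 → deriv (deriv U) y + v * deriv U y + cutoff f uc (U y) = 0) ∧
  U 0 = uc ∧
  (∀ y : ℝ, y < 0 → uc ≤ U y ∧ U y ≤ 1) ∧
  (∀ y : ℝ, 0 < y → 0 ≤ U y ∧ U y ≤ uc) ∧
  Tendsto U atBot (𝓝 1) ∧
  Tendsto U atTop (𝓝 0)

/-! ### Comparison and the square-root equation -/

/-- Comparison principle: a function starting at a nonpositive value whose right derivative is at
most `η` wherever the function is positive grows at most linearly with rate `η`. -/
lemma fencing {h d : ℝ → ℝ} {T η : ℝ} (hη : 0 ≤ η) (hc : ContinuousOn h (Set.Icc 0 T))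
    (hd : ∀ x ∈ Set.Ico 0 T, HasDerivWithinAt h (d x) (Set.Ici x) x) (h0 : h 0 ≤ 0)
    (hb : ∀ x ∈ Set.Ico 0 T, 0 < h x → d x ≤ η) :
    ∀ x ∈ Set.Icc 0 T, h x ≤ η * x := by
  intro x hx
  have key : ∀ κ : ℝ, 0 < κ → h x ≤ (η + κ) * x + κ := by
    intro κ hκ
    refine image_le_of_deriv_right_lt_deriv_boundary' (B := fun x => (η + κ) * x + κ)
      (B' := fun _ => η + κ) hc hd (by simp; linarith) (by fun_prop) ?_ ?_ hx
    · intro y _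
      simpa using (((hasDerivAt_id y).const_mul (η + κ)).add_const κ).hasDerivWithinAt
    · intro y hy hy2
      have h1 : 0 ≤ (η + κ) * y := mul_nonneg (by linarith) hy.1
      have := hb y hy (by rw [hy2]; linarith)
      linarith
  refine le_of_forall_pos_le_add fun δ hδ => ?_
  have hx1 : 0 < x + 1 := by linarith [hx.1]
  have h2 := key (δ / (x + 1)) (by positivity)
  have h3 : δ / (x + 1) * (x + 1) = δ := by field_simp
  nlinarith

lemma abs_sqrt_sub_sqrt_le (a b : ℝ) : |√a - √b| ≤ √|a - b| := by
  have key : ∀ a b : ℝ, √a ≤ √b + √|a - b| := by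
    intro a b
    rw [Real.sqrt_le_left (by positivity)]
    have h1 : b ≤ √b ^ 2 := by
      rcases le_total 0 b with h | h
      · rw [Real.sq_sqrt h]
      · exact h.trans (sq_nonneg _)
    have h2 : √|a - b| ^ 2 = |a - b| := Real.sq_sqrt (abs_nonneg _)
    nlinarith [le_abs_self (a - b), Real.sqrt_nonneg b, Real.sqrt_nonneg |a - b|,
      mul_nonneg (Real.sqrt_nonneg b) (Real.sqrt_nonneg |a - b|)]
  have h1 := key a b
  have h2 := key b a
  rw [abs_sub_comm b a] at h2
  rw [abs_le]; constructor <;> linarith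

lemma sqrt_max_le {x ε : ℝ} (hε : 0 ≤ ε) : √(max x (ε ^ 2)) ≤ √x + ε := by
  rcases le_total x (ε ^ 2) with h | h
  · rw [max_eq_right h, Real.sqrt_sq hε]; linarith [Real.sqrt_nonneg x]
  · rw [max_eq_left h]; linarith

/-- The regularized square root `x ↦ √(max x ε²)` is Lipschitz with constant `1 / (2 ε)`. -/
lemma lipschitz_reg {ε : ℝ} (hε : 0 < ε) (x y : ℝ) :
    |√(max x (ε ^ 2)) - √(max y (ε ^ 2))| ≤ |x - y| / (2 * ε) := by
  have hm : |max x (ε ^ 2) - max y (ε ^ 2)| ≤ |x - y| := abs_max_sub_max_le_abs x y (ε ^ 2)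
  have hle : ∀ z : ℝ, ε ≤ √(max z (ε ^ 2)) := fun z => by
    rw [Real.le_sqrt' hε]; exact le_max_right _ _
  have hsq : ∀ z : ℝ, √(max z (ε ^ 2)) ^ 2 = max z (ε ^ 2) := fun z =>
    Real.sq_sqrt ((sq_nonneg ε).trans (le_max_right _ _))
  rw [le_div_iff₀ (by positivity)]
  refine le_trans ?_ hm
  have hfac : max x (ε ^ 2) - max y (ε ^ 2) = (√(max x (ε ^ 2)) + √(max y (ε ^ 2)))
      * (√(max x (ε ^ 2)) - √(max y (ε ^ 2))) := by
    rw [← sq_sub_sq, hsq, hsq]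
  rw [hfac, abs_mul, mul_comm]
  refine mul_le_mul_of_nonneg_right ?_ (abs_nonneg _)
  have h1 := hle x
  have h2 := hle y
  rw [abs_of_pos (by linarith)]
  linarith

/-- Solvability on `[0, 1]` of the regularization of `ρ' = 2 (g - v √ρ)`, `ρ(0) = 0`. -/
lemma exists_reg {g : ℝ → ℝ} (hg : Continuous g) {v ε : ℝ} (hv : 0 ≤ v) (hε : 0 < ε)
    (hε1 : ε ≤ 1) :
    ∃ ρ : ℝ → ℝ, ρ 0 = 0 ∧ ∀ t ∈ Set.Icc (0 : ℝ) 1,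
      HasDerivWithinAt ρ (2 * (g t - v * √(max (ρ t) (ε ^ 2)))) (Set.Icc 0 1) t := by
  obtain ⟨M, hM⟩ := isCompact_Icc.exists_bound_of_continuousOn
    (hg.continuousOn (s := Set.Icc (0 : ℝ) 1))
  have hM0 : 0 ≤ M := (norm_nonneg _).trans (hM 0 (by simp))
  -- The radius `A ^ 2` is invariant because the field grows only like a square root.
  set A : ℝ := 2 * M + 2 * v + 2 with hA
  have hA1 : 1 ≤ A := by linarith
  have hPL : IsPicardLindelof (fun t x => 2 * (g t - v * √(max x (ε ^ 2))))
      (tmin := 0) (tmax := 1) ⟨0, by simp⟩ (0 : ℝ) (A ^ 2).toNNReal 0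
      (A ^ 2).toNNReal (v / ε).toNNReal := by
    refine ⟨?_, ?_, ?_, ?_⟩
    · intro t _
      refine LipschitzWith.lipschitzOnWith (LipschitzWith.of_dist_le_mul fun x y => ?_)
      rw [Real.dist_eq, Real.dist_eq, Real.coe_toNNReal _ (by positivity)]
      have e : 2 * (g t - v * √(max x (ε ^ 2))) - 2 * (g t - v * √(max y (ε ^ 2)))
          = - (2 * v) * (√(max x (ε ^ 2)) - √(max y (ε ^ 2))) := by ring
      rw [e, abs_mul, abs_neg, abs_of_nonneg (by positivity)]
      refine (mul_le_mul_of_nonneg_left (lipschitz_reg hε x y) (by positivity)).trans_eq ?_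
      field_simp
    · intro x _
      fun_prop
    · intro t ht x hx
      rw [Metric.mem_closedBall, Real.dist_eq, sub_zero,
        Real.coe_toNNReal _ (sq_nonneg A)] at hx
      rw [Real.norm_eq_abs, Real.coe_toNNReal _ (sq_nonneg A)]
      simp only [Real.norm_eq_abs] at hM
      have h1 : √(max x (ε ^ 2)) ≤ A := by
        rw [Real.sqrt_le_left (by linarith)]
        refine max_le ((le_abs_self x).trans hx) ?_
        nlinarith
      have h2 := Real.sqrt_nonneg (max x (ε ^ 2))
      have h3 := abs_le.1 (hM t ht)
      have h4 : v * √(max x (ε ^ 2)) ≤ v * A := mul_le_mul_of_nonneg_left h1 hv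
      have h5 : 0 ≤ v * √(max x (ε ^ 2)) := mul_nonneg hv h2
      have h6 : A ^ 2 = 2 * M * A + 2 * (v * A) + 2 * A := by rw [sq]; nth_rw 1 [hA]; ring
      have h7 : 0 ≤ v * A := by positivity
      rw [abs_le]
      constructor <;> nlinarith
    · simp
  obtain ⟨ρ, h0, hρ⟩ := hPL.exists_eq_forall_mem_Icc_hasDerivWithinAt₀
  exact ⟨ρ, h0, hρ⟩

/-- Solvability on `[0, 1]` of `ρ' = 2 (g - v √ρ)`, `ρ(0) = 0`, although the field is not Lipschitz
at `ρ = 0`. The derivative is two-sided at the endpoints as well, for a suitable extension of `ρ`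
beyond `[0, 1]`; the junk value of `√` at negative reals keeps the field monotone. -/
lemma exists_sqrt_ode {g : ℝ → ℝ} (hg : Continuous g) {v : ℝ} (hv : 0 ≤ v) :
    ∃ ρ : ℝ → ℝ, ρ 0 = 0 ∧ ∀ t ∈ Set.Icc (0 : ℝ) 1,
      HasDerivAt ρ (2 * (g t - v * √(ρ t))) t := by
  set e : ℕ → ℝ := fun n => 1 / ((n : ℝ) + 1) with he
  have he0 : ∀ n, 0 < e n := fun n => by simp only [he]; positivity
  have he1 : ∀ n, e n ≤ 1 := fun n => by
    simp only [he]; rw [div_le_one (by positivity)]; linarith [n.cast_nonneg (α := ℝ)]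
  have het : Tendsto e atTop (𝓝 0) := tendsto_one_div_add_atTop_nhds_zero_nat
  choose σ hσ0 hσ using fun n => exists_reg hg hv (he0 n) (he1 n)
  have hright : ∀ n, ∀ t ∈ Set.Ico (0 : ℝ) 1, HasDerivWithinAt (σ n)
      (2 * (g t - v * √(max (σ n t) (e n ^ 2)))) (Set.Ici t) t := fun n t ht =>
    (hσ n t (Set.Ico_subset_Icc_self ht)).mono_of_mem_nhdsWithin (Icc_mem_nhdsGE_of_mem ht)
  have hcont : ∀ n, ContinuousOn (σ n) (Set.Icc 0 1) := fun n t ht =>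
    (hσ n t ht).continuousWithinAt
  -- Where `σ n > σ m`, monotonicity of the square root leaves only the regularization error of
  -- `σ m` in the difference of the two fields.
  have hone : ∀ n m, ∀ t ∈ Set.Icc (0 : ℝ) 1, σ n t - σ m t ≤ 2 * v * e m := by
    intro n m t ht
    have h := fencing (h := fun t => σ n t - σ m t) (T := 1) (η := 2 * v * e m)
      (by have := he0 m; positivity) ((hcont n).sub (hcont m))
      (fun x hx => (hright n x hx).sub (hright m x hx)) (by simp [hσ0]) ?_ t ht
    · have h0 : 0 ≤ 2 * v * e m := by have := he0 m; positivity
      nlinarith [ht.2]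
    · intro x _ hx
      have h1 : √(σ m x) ≤ √(σ n x) := Real.sqrt_le_sqrt (by linarith)
      have h2 : √(σ n x) ≤ √(max (σ n x) (e n ^ 2)) := Real.sqrt_le_sqrt (le_max_left _ _)
      have h3 := sqrt_max_le (x := σ m x) (he0 m).le
      have h4 := mul_le_mul_of_nonneg_left (h3.trans (add_le_add_left (h1.trans h2) _)) hv
      linarith
  have hcau : ∀ n m, ∀ t ∈ Set.Icc (0 : ℝ) 1, |σ n t - σ m t| ≤ 2 * v * (e n + e m) := by
    intro n m t ht
    have h1 := hone n m t ht
    have h2 := hone m n t ht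
    have h3 : 0 ≤ v * e n := mul_nonneg hv (he0 n).le
    have h4 : 0 ≤ v * e m := mul_nonneg hv (he0 m).le
    rw [abs_le]; constructor <;> linarith
  have hlim : ∀ t ∈ Set.Icc (0 : ℝ) 1, ∃ l, Tendsto (fun n => σ n t) atTop (𝓝 l) := by
    intro t ht
    refine cauchySeq_tendsto_of_complete ?_
    refine cauchySeq_of_le_tendsto_0' (fun n => 4 * v * e n) ?_ (by simpa using het.const_mul (4 * v))
    intro n m hnm
    refine (hcau n m t ht).trans ?_
    have : e m ≤ e n := by
      simp only [he]
      exact one_div_le_one_div_of_le (by positivity) (by simpa using hnm)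
    have := mul_le_mul_of_nonneg_left this hv
    linarith
  choose! r hr using hlim
  have hrσ : ∀ n, ∀ t ∈ Set.Icc (0 : ℝ) 1, |σ n t - r t| ≤ 2 * v * e n := by
    intro n t ht
    have h1 : Tendsto (fun m => |σ n t - σ m t|) atTop (𝓝 |σ n t - r t|) :=
      (tendsto_const_nhds.sub (hr t ht)).abs
    have h2 : Tendsto (fun m => 2 * v * (e n + e m)) atTop (𝓝 (2 * v * (e n + 0))) :=
      (tendsto_const_nhds.add het).const_mul _
    rw [add_zero] at h2
    exact le_of_tendsto_of_tendsto' h1 h2 fun m => hcau n m t ht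
  have het2 : Tendsto (fun n => 2 * v * e n) atTop (𝓝 0) := by
    simpa using het.const_mul (2 * v)
  have hunif : TendstoUniformlyOn σ r atTop (Set.Icc 0 1) := by
    rw [Metric.tendstoUniformlyOn_iff]
    intro δ hδ
    filter_upwards [het2.eventually_lt_const hδ] with n hn t ht
    rw [dist_comm, Real.dist_eq]
    exact (hrσ n t ht).trans_lt hn
  have hrc : ContinuousOn r (Set.Icc 0 1) :=
    hunif.continuousOn (Frequently.of_forall hcont)
  -- Extending the uniform limit continuously makes its primitive differentiable at endpoints.
  set R : ℝ → ℝ := Set.IccExtend zero_le_one (Set.domRestrict (Set.Icc 0 1) r) with hR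
  have hRc : Continuous R := hrc.domRestrict.Icc_extend'
  have hRr : ∀ t ∈ Set.Icc (0 : ℝ) 1, R t = r t := fun t ht => by
    rw [hR, Set.IccExtend_of_mem _ _ ht]; rfl
  set F : ℝ → ℝ := fun t => 2 * (g t - v * √(R t)) with hF
  have hFc : Continuous F := by fun_prop
  set ρ : ℝ → ℝ := fun t => ∫ s in (0 : ℝ)..t, F s with hρ
  have hρd : ∀ t, HasDerivAt ρ (F t) t := fun t => hFc.integral_hasStrictDerivAt 0 t |>.hasDerivAt
  have heq : ∀ t ∈ Set.Icc (0 : ℝ) 1, ρ t = r t := by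
    intro t ht
    have hb : ∀ n, ‖σ n t - ρ t‖ ≤ 2 * v * (√(2 * v * e n) + e n) := by
      intro n
      have hnn : 0 ≤ 2 * v * (√(2 * v * e n) + e n) := by have := he0 n; positivity
      have := norm_image_sub_le_of_norm_deriv_le_segment' (f := fun t => σ n t - ρ t)
        (a := 0) (b := 1) (C := 2 * v * (√(2 * v * e n) + e n))
        (fun x hx => (hσ n x hx).sub (hρd x).hasDerivWithinAt) ?_ t ht
      · simp only [hσ0, hρ, intervalIntegral.integral_same, sub_zero] at this ⊢
        exact this.trans (mul_le_of_le_one_right hnn ht.2)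
      · intro x hx
        have hx' := Set.Ico_subset_Icc_self hx
        have h1 := (abs_sqrt_sub_sqrt_le (σ n x) (r x)).trans (Real.sqrt_le_sqrt (hrσ n x hx'))
        have h2 := sqrt_max_le (x := σ n x) (he0 n).le
        have h3 : √(σ n x) ≤ √(max (σ n x) (e n ^ 2)) := Real.sqrt_le_sqrt (le_max_left _ _)
        have h4 : |√(r x) - √(max (σ n x) (e n ^ 2))| ≤ √(2 * v * e n) + e n := by
          have := he0 n
          rw [abs_le] at h1 ⊢
          constructor <;> linarith [h1.1, h1.2]
        have h5 : 2 * (g x - v * √(max (σ n x) (e n ^ 2))) - F x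
            = 2 * v * (√(r x) - √(max (σ n x) (e n ^ 2))) := by
          simp only [hF, hRr x hx']; ring
        rw [h5, Real.norm_eq_abs, abs_mul, abs_of_nonneg (by positivity)]
        exact mul_le_mul_of_nonneg_left h4 (by positivity)
    have h0 : Tendsto (fun n => 2 * v * (√(2 * v * e n) + e n)) atTop (𝓝 0) := by
      have h1 : Tendsto (fun n => √(2 * v * e n)) atTop (𝓝 0) := by
        have := (Real.continuous_sqrt.tendsto 0).comp het2
        rwa [Real.sqrt_zero] at this
      simpa using (h1.add het).const_mul (2 * v)
    have h1 := squeeze_zero_norm hb h0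
    have h2 : Tendsto (fun n => σ n t) atTop (𝓝 (ρ t)) := by
      simpa using h1.add_const (ρ t)
    exact tendsto_nhds_unique h2 (hr t ht)
  refine ⟨ρ, by simp [hρ], fun t ht => ?_⟩
  have := hρd t
  simp only [hF, hRr t ht] at this
  rwa [heq t ht]

/-! ### Matching at the cut-off -/

/-- Shooting: for some speed `v > 0` the squared momentum `ρ` attains at `t = 1 - uc` the value
`(v uc)²` required for matching with the exponential tail below the cut-off. -/
lemma exists_speed {g g' : ℝ → ℝ} (hg : Continuous g) (hg0 : g 0 = 0) {M : ℝ}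
    (hgd : ∀ t ∈ Set.Icc (0 : ℝ) 1, HasDerivAt g (g' t) t)
    (hM : ∀ t ∈ Set.Icc (0 : ℝ) 1, |g' t| ≤ M)
    (hpos : ∀ t ∈ Set.Ioo (0 : ℝ) 1, 0 < g t) {uc : ℝ} (huc : uc ∈ Set.Ioo (0 : ℝ) 1) :
    ∃ v : ℝ, 0 < v ∧ ∃ ρ : ℝ → ℝ,
      (∀ t ∈ Set.Icc (0 : ℝ) 1, HasDerivAt ρ (2 * (g t - v * √(ρ t))) t) ∧
      (∀ t ∈ Set.Ioo (0 : ℝ) 1, 0 < ρ t) ∧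
      (∀ t ∈ Set.Icc (0 : ℝ) 1, ρ t ≤ M * t ^ 2) ∧
      ρ (1 - uc) = (v * uc) ^ 2 := by
  have hM0 : 0 ≤ M := (abs_nonneg _).trans (hM 0 (by simp))
  have hgnn : ∀ t ∈ Set.Ico (0 : ℝ) 1, 0 ≤ g t := by
    intro t ht
    rcases ht.1.eq_or_lt with h | h
    · rw [← h, hg0]
    · exact (hpos t ⟨h, ht.2⟩).le
  have hgM : ∀ t ∈ Set.Icc (0 : ℝ) 1, g t ≤ M * t :=
    fencing hM0 hg.continuousOn
      (fun x hx => (hgd x (Set.Ico_subset_Icc_self hx)).hasDerivWithinAt) hg0.le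
      (fun x hx _ => (le_abs_self _).trans (hM x (Set.Ico_subset_Icc_self hx)))
  choose! ρ hρ0 hρ using fun (v : ℝ) (hv : 0 ≤ v) => exists_sqrt_ode hg hv
  have hρc : ∀ v, 0 ≤ v → ContinuousOn (ρ v) (Set.Icc 0 1) := fun v hv t ht =>
    (hρ v hv t ht).continuousAt.continuousWithinAt
  have hright : ∀ v, 0 ≤ v → ∀ t ∈ Set.Ico (0 : ℝ) 1,
      HasDerivWithinAt (ρ v) (2 * (g t - v * √(ρ v t))) (Set.Ici t) t := fun v hv t ht =>
    (hρ v hv t (Set.Ico_subset_Icc_self ht)).hasDerivWithinAt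
  have hupper : ∀ v, 0 ≤ v → ∀ t ∈ Set.Icc (0 : ℝ) 1, ρ v t ≤ M * t ^ 2 := by
    intro v hv t ht
    have h := fencing (h := fun t => ρ v t - M * t ^ 2)
      (d := fun t => 2 * (g t - v * √(ρ v t)) - M * (2 * t)) (T := 1) (η := 0) le_rfl
      ((hρc v hv).sub (by fun_prop))
      (fun x hx => (hright v hv x hx).sub (by
        simpa using ((hasDerivAt_pow 2 x).const_mul M).hasDerivWithinAt))
      (by simp [hρ0 v hv]) ?_ t ht
    · linarith
    · intro x hx _
      have h1 := hgM x (Set.Ico_subset_Icc_self hx)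
      have h2 := mul_nonneg hv (Real.sqrt_nonneg (ρ v x))
      linarith
  have hlower : ∀ v, 0 ≤ v → ∀ t ∈ Set.Ioo (0 : ℝ) 1, 0 < ρ v t := by
    intro v hv t ht
    -- For this `k` the function `(k g)²` is a subsolution.
    set k : ℝ := 1 / (1 + M + v) with hk
    have hk0 : 0 < k := by positivity
    have hk1 : k * (1 + M + v) = 1 := by rw [hk]; field_simp
    have hkle : k ≤ 1 := by nlinarith
    have h := fencing (h := fun t => (k * g t) ^ 2 - ρ v t)
      (d := fun t => 2 * (k * g t) * (k * g' t) - 2 * (g t - v * √(ρ v t))) (T := 1) (η := 0)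
      le_rfl (ContinuousOn.sub (by fun_prop) (hρc v hv))
      (fun x hx => HasDerivWithinAt.sub (by
        simpa using (((hgd x (Set.Ico_subset_Icc_self hx)).const_mul k).fun_pow 2).hasDerivWithinAt)
        (hright v hv x hx))
      (by simp [hρ0 v hv, hg0]) ?_ t (Set.Ioo_subset_Icc_self ht)
    · have := hpos t ht
      have h2 : 0 < (k * g t) ^ 2 := by positivity
      linarith
    · intro x hx hx2
      have h1 := hgnn x hx
      have h2 : √(ρ v x) ≤ k * g x := by
        rw [Real.sqrt_le_left (by positivity)]; linarith
      have h3 := mul_le_mul_of_nonneg_left h2 hv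
      have h4 : k * (k * g' x) ≤ k * M := by
        have h5 : g' x ≤ M := (le_abs_self _).trans (hM x (Set.Ico_subset_Icc_self hx))
        have h6 : k * g' x ≤ k * M := mul_le_mul_of_nonneg_left h5 hk0.le
        have h7 : k * (k * M) ≤ 1 * (k * M) :=
          mul_le_mul_of_nonneg_right hkle (by positivity)
        have h8 := mul_le_mul_of_nonneg_left h6 hk0.le
        linarith
      have h9 : g x * (k * (k * g' x) + v * k - 1) ≤ 0 :=
        mul_nonpos_of_nonneg_of_nonpos h1 (by nlinarith)
      nlinarith
  have hlip : ∀ v w, 0 ≤ v → 0 ≤ w → ∀ t ∈ Set.Icc (0 : ℝ) 1,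
      ρ v t - ρ w t ≤ 2 * √M * |v - w| := by
    intro v w hv hw t ht
    have h := fencing (h := fun t => ρ v t - ρ w t)
      (d := fun t => 2 * (g t - v * √(ρ v t)) - 2 * (g t - w * √(ρ w t))) (T := 1)
      (η := 2 * √M * |v - w|) (by positivity)
      ((hρc v hv).sub (hρc w hw))
      (fun x hx => (hright v hv x hx).sub (hright w hw x hx))
      (by simp [hρ0 v hv, hρ0 w hw]) ?_ t ht
    · exact h.trans (mul_le_of_le_one_right (by positivity) ht.2)
    · intro x hx hx2
      have h1 : √(ρ w x) ≤ √(ρ v x) := Real.sqrt_le_sqrt (by linarith)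
      have h2 : √(ρ w x) ≤ √M := by
        refine Real.sqrt_le_sqrt ((hupper w hw x (Set.Ico_subset_Icc_self hx)).trans ?_)
        exact mul_le_of_le_one_right hM0 (pow_le_one₀ hx.1 hx.2.le)
      have h3 := mul_le_mul_of_nonneg_left h1 hv
      have h4 : (w - v) * √(ρ w x) ≤ |v - w| * √M := by
        rw [abs_sub_comm]
        exact mul_le_mul (le_abs_self _) h2 (Real.sqrt_nonneg _) (abs_nonneg _)
      linarith
  have hL : 1 - uc ∈ Set.Ioo (0 : ℝ) 1 := ⟨by linarith [huc.2], by linarith [huc.1]⟩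
  have hL' := Set.Ioo_subset_Icc_self hL
  set V : ℝ := (M + 1) / uc with hV
  have huc0 := huc.1
  have hV0 : 0 ≤ V := by positivity
  have hVuc : V * uc = M + 1 := by rw [hV]; field_simp
  have hcontv : ContinuousOn (fun v => ρ v (1 - uc)) (Set.Icc 0 V) := by
    refine LipschitzOnWith.continuousOn (K := (2 * √M).toNNReal) ?_
    refine LipschitzOnWith.of_dist_le_mul fun v hv w hw => ?_
    rw [Real.dist_eq, Real.dist_eq, Real.coe_toNNReal _ (by positivity)]
    have h1 := hlip v w hv.1 hw.1 _ hL'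
    have h2 := hlip w v hw.1 hv.1 _ hL'
    rw [abs_sub_comm w v] at h2
    rw [abs_le]; constructor <;> linarith
  have hcontv' : ContinuousOn (fun v => ρ v (1 - uc) - (v * uc) ^ 2) (Set.Icc 0 V) :=
    hcontv.sub (by fun_prop)
  have hmem : (0 : ℝ) ∈ Set.Icc (ρ V (1 - uc) - (V * uc) ^ 2)
      (ρ 0 (1 - uc) - ((0 : ℝ) * uc) ^ 2) := by
    constructor
    · have h1 := hupper V hV0 _ hL'
      have h2 : M * (1 - uc) ^ 2 ≤ M :=
        mul_le_of_le_one_right hM0 (pow_le_one₀ hL.1.le hL.2.le)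
      rw [hVuc]; nlinarith
    · have := hlower 0 le_rfl _ hL
      simpa using this.le
  obtain ⟨v, hv, hv2⟩ := intermediate_value_Icc' hV0 hcontv' hmem
  simp only at hv2
  have hvne : v ≠ 0 := by
    rintro rfl
    have := hlower 0 le_rfl _ hL
    simp at hv2
    linarith
  exact ⟨v, lt_of_le_of_ne hv.1 hvne.symm, ρ v, hρ v hv.1, hlower v hv.1, hupper v hv.1,
    by linarith⟩

/-! ### From momentum to profile -/

/-- A positive momentum `P` vanishing at most linearly at `0` and `1` defines a global solution of
`U' = -P(U)` joining `1` to `0`. In the logistic coordinate `U = sigmoid x` the equation becomes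
`x' = -1 / q(x)` with `q` continuous and bounded below, and it is solved by inverting `∫ q`. -/
lemma exists_profile {P : ℝ → ℝ} (hP : ContinuousOn P (Set.Ioo 0 1))
    (hpos : ∀ u ∈ Set.Ioo (0 : ℝ) 1, 0 < P u) {K : ℝ}
    (hK : ∀ u ∈ Set.Ioo (0 : ℝ) 1, P u ≤ K * (u * (1 - u))) {u₀ : ℝ}
    (hu₀ : u₀ ∈ Set.Ioo (0 : ℝ) 1) :
    ∃ U : ℝ → ℝ, U 0 = u₀ ∧ (∀ y, U y ∈ Set.Ioo (0 : ℝ) 1) ∧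
      (∀ y, HasDerivAt U (-P (U y)) y) ∧ Tendsto U atBot (𝓝 1) ∧ Tendsto U atTop (𝓝 0) := by
  have hs : ∀ x, sigmoid x ∈ Set.Ioo (0 : ℝ) 1 := fun x => ⟨sigmoid_pos x, sigmoid_lt_one x⟩
  have hw : ∀ x, 0 < sigmoid x * (1 - sigmoid x) := fun x =>
    mul_pos (hs x).1 (by linarith [(hs x).2])
  have hPs : ∀ x, 0 < P (sigmoid x) := fun x => hpos _ (hs x)
  have hK0 : 0 < K := by
    have h1 := (hPs 0).trans_le (hK _ (hs 0))
    exact pos_of_mul_pos_left h1 (hw 0).le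
  set q : ℝ → ℝ := fun x => sigmoid x * (1 - sigmoid x) / P (sigmoid x) with hq
  have hqpos : ∀ x, 0 < q x := fun x => div_pos (hw x) (hPs x)
  have hqc : Continuous q := by
    have h1 : Continuous fun x => P (sigmoid x) :=
      hP.comp_continuous continuous_sigmoid hs
    exact (continuous_sigmoid.mul (continuous_const.sub continuous_sigmoid)).div h1
      fun x => (hPs x).ne'
  have hqK : ∀ x, 1 / K ≤ q x := fun x => by
    rw [hq, div_le_div_iff₀ hK0 (hPs x)]
    have := hK _ (hs x)
    linarith
  set H : ℝ → ℝ := fun x => ∫ t in (0 : ℝ)..x, q t with hH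
  have hHd : ∀ x, HasDerivAt H (q x) x := fun x => (hqc.integral_hasStrictDerivAt 0 x).hasDerivAt
  have hHmono : StrictMono H := strictMono_of_hasDerivAt_pos hHd hqpos
  have hH0 : H 0 = 0 := by simp [hH]
  have hHm : Monotone fun x => H x - x * (1 / K) := by
    refine monotone_of_hasDerivAt_nonneg (f' := fun x => q x - 1 * (1 / K))
      (fun x => (hHd x).sub ((hasDerivAt_id x).mul_const (1 / K))) ?_
    intro x
    have := hqK x
    simp only [Pi.zero_apply]
    linarith
  have hKinv : 0 < 1 / K := by positivity
  have hHtop : Tendsto H atTop atTop := by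
    refine tendsto_atTop_mono' _ ?_ (tendsto_id.atTop_mul_const hKinv)
    filter_upwards [eventually_ge_atTop 0] with x hx
    have := hHm hx
    simp only [hH0, id] at *
    linarith
  have hHbot : Tendsto H atBot atBot := by
    refine tendsto_atBot_mono' _ ?_ (tendsto_id.atBot_mul_const hKinv)
    filter_upwards [eventually_le_atBot 0] with x hx
    have := hHm hx
    simp only [hH0, id] at *
    linarith
  have hHsurj : Function.Surjective H :=
    (continuous_iff_continuousAt.2 fun x => (hHd x).continuousAt).surjective hHtop hHbot
  set e := hHmono.orderIsoOfSurjective H hHsurj with he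
  have heH : ∀ x, e x = H x := fun x => rfl
  have hesymm : ∀ y, H (e.symm y) = y := fun y => by rw [← heH]; exact e.apply_symm_apply y
  have hed : ∀ y, HasDerivAt e.symm (q (e.symm y))⁻¹ y := fun y =>
    HasDerivAt.of_local_left_inverse e.symm.continuous.continuousAt (hHd _) (hqpos _).ne'
      (Eventually.of_forall hesymm)
  obtain ⟨x₀, hx₀⟩ : ∃ x, sigmoid x = u₀ := by
    have : u₀ ∈ Set.range Real.sigmoid := by rw [range_sigmoid]; exact hu₀
    exact this
  refine ⟨fun y => sigmoid (e.symm (H x₀ - y)), ?_, fun y => hs _, fun y => ?_, ?_, ?_⟩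
  · have : e.symm (H x₀) = x₀ := by rw [← heH]; exact e.symm_apply_apply x₀
    simp [this, hx₀]
  · have h1 : HasDerivAt (fun y => e.symm (H x₀ - y)) _ y :=
      (hed (H x₀ - y)).comp y ((hasDerivAt_id y).const_sub (H x₀))
    have h2 := (hasDerivAt_sigmoid (e.symm (H x₀ - y))).comp y h1
    refine h2.congr_deriv ?_
    have h3 := (hw (e.symm (H x₀ - y))).ne'
    rw [hq, inv_div]
    rw [mul_neg_one, mul_neg, mul_div_cancel₀ _ h3]
  · refine tendsto_sigmoid_atTop.comp (e.symm.tendsto_atTop.comp ?_)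
    exact tendsto_const_nhds.add_atTop tendsto_neg_atBot_atTop
  · refine tendsto_sigmoid_atBot.comp (e.symm.tendsto_atBot.comp ?_)
    exact tendsto_const_nhds.add_atBot tendsto_neg_atTop_atBot

/-! ### The travelling wave -/

/-- Existence of a permanent form travelling wave for each cut-off value. -/
theorem ptw_exists (f : ℝ → ℝ) (hf : IsKPP f) (uc : ℝ) (huc : uc ∈ Set.Ioo (0:ℝ) 1) :
    ∃ v : ℝ, 0 < v ∧ ∃ U : ℝ → ℝ, IsPTW f uc v U := by
  obtain ⟨hfC, -, hf1, -, -, hfpos, -⟩ := hf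
  have hfd : ∀ u, HasDerivAt f (deriv f u) u := fun u =>
    (hfC.differentiable one_ne_zero u).hasDerivAt
  obtain ⟨M, hM⟩ := isCompact_Icc.exists_bound_of_continuousOn
    ((hfC.continuous_deriv le_rfl).continuousOn (s := Set.Icc (0 : ℝ) 1))
  have hM0 : 0 ≤ M := (norm_nonneg _).trans (hM 0 (by simp))
  obtain ⟨v, hv, ρ, hρd, hρpos, hρM, hρuc⟩ := exists_speed (g := fun t => f (1 - t))
    (g' := fun t => -deriv f (1 - t)) (M := M)
    (hfC.continuous.comp (continuous_const.sub continuous_id)) (by simp [hf1])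
    (fun t _ => ((hfd (1 - t)).comp t ((hasDerivAt_id t).const_sub 1)).congr_deriv (by ring))
    (fun t ht => by
      rw [abs_neg]
      exact hM (1 - t) ⟨by linarith [ht.2], by linarith [ht.1]⟩)
    (fun t ht => (hfpos (1 - t) (by linarith [ht.2]) (by linarith [ht.1])).1) huc
  obtain ⟨huc0, huc1⟩ := huc
  -- The momentum `-U'` as a function of `U`: it is `v u` below the cut-off, `√ρ(1 - u)` above.
  set P : ℝ → ℝ := fun u => v * min u uc + √(ρ (1 - max u uc)) - v * uc with hP
  have hρc : ContinuousOn ρ (Set.Icc 0 1) := fun t ht =>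
    (hρd t ht).continuousAt.continuousWithinAt
  have hsq : √(ρ (1 - uc)) = v * uc := by
    rw [hρuc]; exact Real.sqrt_sq (by positivity)
  have hPle : ∀ u, u ≤ uc → P u = v * u := fun u hu => by
    simp only [hP, min_eq_left hu, max_eq_right hu, hsq]; ring
  have hPge : ∀ u, uc ≤ u → P u = √(ρ (1 - u)) := fun u hu => by
    simp only [hP, min_eq_right hu, max_eq_left hu]; ring
  have hPc : ContinuousOn P (Set.Ioo 0 1) := by
    have h1 : ContinuousOn (fun u => ρ (1 - max u uc)) (Set.Ioo 0 1) := by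
      refine hρc.comp (by fun_prop) fun u hu => ⟨?_, ?_⟩
      · linarith [max_lt hu.2 huc1]
      · linarith [le_max_right u uc]
    exact ((by fun_prop : ContinuousOn (fun u => v * min u uc) _).add h1.sqrt).sub (by fun_prop)
  have hPpos : ∀ u ∈ Set.Ioo (0 : ℝ) 1, 0 < P u := by
    intro u hu
    rcases le_total u uc with h | h
    · rw [hPle u h]; exact mul_pos hv hu.1
    · rw [hPge u h]
      exact Real.sqrt_pos.2 (hρpos _ ⟨by linarith [hu.2], by linarith [hu.1]⟩)
  have hPK : ∀ u ∈ Set.Ioo (0 : ℝ) 1, P u ≤ (v / (1 - uc) + √M / uc) * (u * (1 - u)) := by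
    intro u hu
    have h1uc : 0 < 1 - uc := by linarith
    have h1u : 0 < 1 - u := by linarith [hu.2]
    have hu0 := hu.1
    rcases le_total u uc with h | h
    · rw [hPle u h]
      have h1 : 0 ≤ √M / uc * (u * (1 - u)) := by positivity
      have h2 : v / (1 - uc) * (u * (1 - uc)) ≤ v / (1 - uc) * (u * (1 - u)) := by
        gcongr
      have h3 : v / (1 - uc) * (u * (1 - uc)) = v * u := by field_simp
      linarith
    · rw [hPge u h]
      have h1 : 0 ≤ v / (1 - uc) * (u * (1 - u)) := by positivity
      have h2 : √M / uc * (uc * (1 - u)) ≤ √M / uc * (u * (1 - u)) := by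
        gcongr
      have h3 : √M / uc * (uc * (1 - u)) = √M * (1 - u) := by field_simp
      have h4 : √(ρ (1 - u)) ≤ √M * (1 - u) := by
        rw [Real.sqrt_le_left (by positivity), mul_pow, Real.sq_sqrt hM0]
        exact hρM _ ⟨h1u.le, by linarith⟩
      linarith
  obtain ⟨U, hU0, hUmem, hUd, hUbot, hUtop⟩ := exists_profile hPc hPpos hPK ⟨huc0, huc1⟩
  have hanti : StrictAnti U := strictAnti_of_hasDerivAt_neg hUd
    fun y => neg_neg_of_pos (hPpos _ (hUmem y))
  have hUneg : ∀ y, y < 0 → uc < U y := fun y hy => hU0 ▸ hanti hy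
  have hUpos : ∀ y, 0 < y → U y < uc := fun y hy => hU0 ▸ hanti hy
  have hderiv : deriv U = fun y => -P (U y) := funext fun y => (hUd y).deriv
  have hUdiff : Differentiable ℝ U := fun y => (hUd y).differentiableAt
  have hUC1 : ContDiff ℝ 1 U := by
    rw [contDiff_one_iff_deriv]
    refine ⟨hUdiff, ?_⟩
    rw [hderiv]
    exact (hPc.comp_continuous hUdiff.continuous hUmem).neg
  have hρC1 : ContDiffOn ℝ 1 ρ (Set.Ioo 0 1) := by
    rw [show (1 : WithTop ℕ∞) = 0 + 1 by simp, contDiffOn_succ_iff_deriv_of_isOpen isOpen_Ioo]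
    refine ⟨fun t ht => (hρd t (Set.Ioo_subset_Icc_self ht)).differentiableAt
      |>.differentiableWithinAt, by simp, ?_⟩
    rw [contDiffOn_zero]
    have hρc' := hρc.mono Set.Ioo_subset_Icc_self
    have hfc := hfC.continuous
    refine ContinuousOn.congr (f := fun t => 2 * (f (1 - t) - v * √(ρ t))) ?_
      fun t ht => (hρd t (Set.Ioo_subset_Icc_self ht)).deriv
    exact continuousOn_const.mul ((by fun_prop : ContinuousOn (fun t => f (1 - t)) _).sub
      (continuousOn_const.mul hρc'.sqrt))
  have hPeqL : ∀ u, u < uc → P =ᶠ[𝓝 u] fun u => v * u := fun u hu => by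
    filter_upwards [Iio_mem_nhds hu] with w hw using hPle w (le_of_lt hw)
  have hPeqR : ∀ u, uc < u → P =ᶠ[𝓝 u] fun u => √(ρ (1 - u)) := fun u hu => by
    filter_upwards [Ioi_mem_nhds hu] with w hw using hPge w (le_of_lt hw)
  have hPC1 : ∀ u ∈ Set.Ioo (0 : ℝ) 1, u ≠ uc → ContDiffAt ℝ 1 P u := by
    intro u hu hne
    rcases lt_or_gt_of_ne hne with h | h
    · exact ContDiffAt.congr_of_eventuallyEq (by fun_prop) (hPeqL u h)
    · have hm : 1 - u ∈ Set.Ioo (0 : ℝ) 1 := ⟨by linarith [hu.2], by linarith [hu.1]⟩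
      refine ContDiffAt.congr_of_eventuallyEq ?_ (hPeqR u h)
      refine ContDiffAt.sqrt ?_ (hρpos _ hm).ne'
      exact (hρC1.contDiffAt (isOpen_Ioo.mem_nhds hm)).comp u
        (by fun_prop : ContDiffAt ℝ 1 (fun u : ℝ => 1 - u) u)
  have hUne : ∀ y, y ≠ 0 → U y ≠ uc := fun y hy h => hy (hanti.injective (h.trans hU0.symm))
  refine ⟨v, hv, U, hUC1, ?_, ?_, hU0, fun y hy => ⟨(hUneg y hy).le, (hUmem y).2.le⟩,
    fun y hy => ⟨(hUmem y).1.le, (hUpos y hy).le⟩, hUbot, hUtop⟩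
  · intro y hy
    have hopen : IsOpen ({0}ᶜ : Set ℝ) := isOpen_compl_singleton
    refine ContDiffOn.contDiffAt (s := {0}ᶜ) ?_ (hopen.mem_nhds hy)
    rw [show (2 : WithTop ℕ∞) = 1 + 1 by norm_num, contDiffOn_succ_iff_deriv_of_isOpen hopen]
    refine ⟨hUdiff.differentiableOn, by simp, fun z hz => ?_⟩
    rw [hderiv]
    exact ((hPC1 _ (hUmem z) (hUne z hz)).comp z hUC1.contDiffAt).neg.contDiffWithinAt
  · intro y hy
    have hPy := hPpos _ (hUmem y)
    have hdd : ∀ p, HasDerivAt P p (U y) → deriv (deriv U) y = p * P (U y) := by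
      intro p hp
      rw [hderiv]
      have := (hp.comp y (hUd y)).neg.deriv
      refine Eq.trans this ?_
      ring
    have hdy : deriv U y = -P (U y) := (hUd y).deriv
    rcases lt_or_gt_of_ne hy with h | h
    · have hlt := hUneg y h
      have hm : 1 - U y ∈ Set.Ioo (0 : ℝ) 1 :=
        ⟨by linarith [(hUmem y).2], by linarith [(hUmem y).1]⟩
      have hPU := hPge _ hlt.le
      have h1 : HasDerivAt (fun u => ρ (1 - u)) _ (U y) :=
        (hρd _ (Set.Ioo_subset_Icc_self hm)).comp (U y) ((hasDerivAt_id (U y)).const_sub 1)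
      have h2 := (h1.sqrt (hρpos _ hm).ne').congr_of_eventuallyEq (hPeqR _ hlt)
      rw [hdd _ h2, hdy, cutoff, if_pos hlt, sub_sub_cancel, ← hPU]
      field_simp
      ring
    · have hlt := hUpos y h
      have h2 : HasDerivAt P v (U y) := by
        have : HasDerivAt (fun u => v * u) v (U y) := by
          simpa using (hasDerivAt_id (U y)).const_mul v
        exact this.congr_of_eventuallyEq (hPeqL _ hlt)
      rw [hdd _ h2, hdy, cutoff, if_neg (not_lt.2 hlt.le)]
      ring
end

section
/- For each KPP reaction function f, the propagation speed function v* : (0,1) → ℝ⁺ is continuous on (0,1). -/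
/-!
A travelling wave with cut-off `uc` and speed `v` is strictly decreasing wherever it is below `1`,
because `exp (v y) * U' y` is antitone and can be neither positive anywhere nor zero at a point
where `U < 1`. Hence `U'` is a function of `U`: writing `P (U y) = -U' y` gives a phase
trajectory `P > 0` on `(0,1)` with `P u = v u` for `u ≤ uc`, `P' = v - f / P` on `(uc, 1)`, and
values arbitrarily close to `0` near `u = 1` (`exists_isPhase`).

If `v₁ ≤ v₂`, then once `P₁ < P₂` at a point beyond both cut-offs the gap `P₂ - P₁` can no longer
shrink, which contradicts the behaviour at `u = 1`; so `P₂ ≤ P₁` there (`IsPhase.le_of_speed_le`).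
Two consequences for `uc₁ ≤ uc₂` follow.

* `v₂ ≤ v₁` (`IsPhase.speed_le`): otherwise `P₁ uc₂ ≤ v₁ uc₂ < v₂ uc₂ = P₂ uc₂`.
* `(v₁ uc₁)² - 2 (uc₂ - uc₁) ≤ (v₂ uc₂)²` (`IsPhase.sq_speed_le`): since `v₂ ≤ v₁`, we have
  `P₁ uc₂ ≤ P₂ uc₂ = v₂ uc₂`, while `(P₁²)' = 2 v₁ P₁ - 2 f ≥ -2`.

These squeeze `(vstar u)²` between `(vstar u₀)²` and an explicit function of `u`
that is continuous at `u₀` and equal to `(vstar u₀)²` there.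
-/


open Real Filter Topology

/-- Phase-plane form of a travelling wave: `P` is minus the slope of the wave as a function of its
height `u ∈ (0,1)`. The field `small` is the weak form of `P u → 0` as `u → 1` used below. -/
structure IsPhase (f : ℝ → ℝ) (uc v : ℝ) (P : ℝ → ℝ) : Prop where
  cont : ∀ u, 0 < u → u < 1 → ContinuousAt P u
  pos : ∀ u, 0 < u → u < 1 → 0 < P u
  lin : ∀ u, 0 < u → u ≤ uc → P u = v * u
  ode : ∀ u, uc < u → u < 1 → HasDerivAt P (v - f u / P u) u
  small : ∀ δ > 0, ∀ a < 1, ∃ u, a < u ∧ u < 1 ∧ P u < δ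

/-! ### From travelling waves to phase trajectories -/

lemma IsKPP.cutoff_nonneg {f : ℝ → ℝ} (hf : IsKPP f) {uc u : ℝ} (huc : 0 < uc) (hu : u ≤ 1) :
    0 ≤ cutoff f uc u := by
  obtain ⟨-, -, h1, -, -, hpos, -⟩ := hf
  unfold cutoff
  split_ifs with h
  · rcases hu.lt_or_eq with h' | h'
    · exact (hpos u (huc.trans h) h').1.le
    · rw [h', h1]
  · exact le_rfl

lemma IsPTW.mem_Icc {f U : ℝ → ℝ} {uc v : ℝ} (huc : uc ∈ Set.Ioo (0 : ℝ) 1)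
    (h : IsPTW f uc v U) (y : ℝ) : 0 ≤ U y ∧ U y ≤ 1 := by
  obtain ⟨-, -, -, h0, hneg, hpos, -, -⟩ := h
  obtain ⟨a, b⟩ := huc
  rcases lt_trichotomy y 0 with hy | rfl | hy
  · exact ⟨a.le.trans (hneg y hy).1, (hneg y hy).2⟩
  · exact ⟨by linarith, by linarith⟩
  · exact ⟨(hpos y hy).1, (hpos y hy).2.trans b.le⟩

lemma IsPTW.hasDerivAt {f U : ℝ → ℝ} {uc v : ℝ} (h : IsPTW f uc v U) (y : ℝ) :
    HasDerivAt U (deriv U y) y :=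
  ((h.1.differentiable (by norm_num)) y).hasDerivAt

lemma IsPTW.continuous_deriv {f U : ℝ → ℝ} {uc v : ℝ} (h : IsPTW f uc v U) :
    Continuous (deriv U) :=
  h.1.continuous_deriv (by norm_num)

lemma IsPTW.hasDerivAt_deriv {f U : ℝ → ℝ} {uc v : ℝ} (h : IsPTW f uc v U) {y : ℝ} (hy : y ≠ 0) :
    HasDerivAt (deriv U) (-(v * deriv U y + cutoff f uc (U y))) y := by
  have h2 : ContDiffAt ℝ 1 (deriv U) y := by
    have := (h.2.1 y hy).derivWithin (m := 1) (by norm_num)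
    simpa using this
  have h3 := (h2.differentiableAt (by norm_num)).hasDerivAt
  have h4 := h.2.2.1 y hy
  exact h3.congr_deriv (by linarith)

/-- The quantity `exp (v y) U' y` is antitone, being an integrating factor form of the wave equation
with a nonnegative reaction term. -/
lemma IsPTW.antitone_exp {f U : ℝ → ℝ} {uc v : ℝ} (hf : IsKPP f) (huc : uc ∈ Set.Ioo (0 : ℝ) 1)
    (h : IsPTW f uc v U) : Antitone fun y => exp (v * y) * deriv U y := by
  have hd : ∀ y, y ≠ 0 → HasDerivAt (fun y => exp (v * y) * deriv U y)
      (-(exp (v * y) * cutoff f uc (U y))) y := by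
    intro y hy
    have h1 : HasDerivAt (fun y => exp (v * y)) (exp (v * y) * (v * 1)) y :=
      ((hasDerivAt_id y).const_mul v).exp
    exact (h1.mul (h.hasDerivAt_deriv hy)).congr_deriv (by ring)
  have hc : Continuous fun y => exp (v * y) * deriv U y :=
    (by fun_prop : Continuous fun y => exp (v * y)).mul h.continuous_deriv
  have hn : ∀ y, y ≠ 0 → deriv (fun y => exp (v * y) * deriv U y) y ≤ 0 := by
    intro y hy
    rw [(hd y hy).deriv, neg_nonpos]
    exact mul_nonneg (exp_pos _).le (hf.cutoff_nonneg huc.1 (h.mem_Icc huc y).2)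
  refine AntitoneOn.Iic_union_Ici (a := 0) ?_ ?_
  · refine antitoneOn_of_deriv_nonpos (convex_Iic 0) hc.continuousOn ?_ ?_ <;>
      rw [interior_Iic] <;> intro y hy
    · exact (hd y (ne_of_lt hy)).differentiableAt.differentiableWithinAt
    · exact hn y (ne_of_lt hy)
  · refine antitoneOn_of_deriv_nonpos (convex_Ici 0) hc.continuousOn ?_ ?_ <;>
      rw [interior_Ici] <;> intro y hy
    · exact (hd y (ne_of_gt hy)).differentiableAt.differentiableWithinAt
    · exact hn y (ne_of_gt hy)

lemma IsPTW.deriv_nonpos {f U : ℝ → ℝ} {uc v : ℝ} (hf : IsKPP f) (huc : uc ∈ Set.Ioo (0 : ℝ) 1)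
    (hv : 0 ≤ v) (h : IsPTW f uc v U) (y : ℝ) : deriv U y ≤ 0 := by
  by_contra! hpos
  set k := exp (v * y) * deriv U y with hk
  have hk0 : 0 < k := mul_pos (exp_pos _) hpos
  have hge : ∀ x, x ≤ min y 0 → k ≤ deriv U x := by
    intro x hx
    have h1 : k ≤ exp (v * x) * deriv U x := h.antitone_exp hf huc (hx.trans (min_le_left _ _))
    have h2 : exp (v * x) ≤ 1 :=
      exp_le_one_iff.2 (mul_nonpos_of_nonneg_of_nonpos hv (hx.trans (min_le_right _ _)))
    have h3 : 0 < deriv U x := by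
      by_contra! h4
      have := mul_nonpos_of_nonneg_of_nonpos (exp_pos (v * x)).le h4
      linarith
    nlinarith
  -- A slope of at least `k` along an interval of length `2 / k` would force `U` out of `[0,1]`.
  have := (convex_Iic (min y 0)).mul_sub_le_image_sub_of_le_deriv
    h.1.continuous.continuousOn (h.1.differentiable (by norm_num)).differentiableOn
    (C := k) (fun x hx => hge x (Set.mem_Iic.1 (interior_subset hx))) (min y 0 - 2 / k)
    (by simp only [Set.mem_Iic]; have : 0 < 2 / k := by positivity
        linarith) (min y 0) (by simp)
    (by have : 0 < 2 / k := by positivity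
        linarith)
  have e : k * (min y 0 - (min y 0 - 2 / k)) = 2 := by field_simp; ring
  have a := (h.mem_Icc huc (min y 0)).2
  have b := (h.mem_Icc huc (min y 0 - 2 / k)).1
  linarith

lemma IsPTW.antitone {f U : ℝ → ℝ} {uc v : ℝ} (hf : IsKPP f) (huc : uc ∈ Set.Ioo (0 : ℝ) 1)
    (hv : 0 ≤ v) (h : IsPTW f uc v U) : Antitone U :=
  antitone_of_deriv_nonpos (h.1.differentiable (by norm_num)) (h.deriv_nonpos hf huc hv)

/-- A critical point would make `U` constant to its left, hence equal to `1` there. -/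
lemma IsPTW.deriv_neg {f U : ℝ → ℝ} {uc v : ℝ} (hf : IsKPP f) (huc : uc ∈ Set.Ioo (0 : ℝ) 1)
    (hv : 0 ≤ v) (h : IsPTW f uc v U) {y : ℝ} (hy : U y < 1) : deriv U y < 0 := by
  refine lt_of_le_of_ne (h.deriv_nonpos hf huc hv y) fun h0 => ?_
  have hz : ∀ x ≤ y, 0 ≤ deriv U x := by
    intro x hx
    have h1 : exp (v * y) * deriv U y ≤ exp (v * x) * deriv U x := h.antitone_exp hf huc hx
    rw [h0, mul_zero] at h1
    exact nonneg_of_mul_nonneg_right h1 (exp_pos _)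
  have hm : MonotoneOn U (Set.Iic y) :=
    monotoneOn_of_deriv_nonneg (convex_Iic y) h.1.continuous.continuousOn
      (h.1.differentiable (by norm_num)).differentiableOn
      (fun x hx => hz x (Set.mem_Iic.1 (interior_subset hx)))
  have hlim : (1 : ℝ) ≤ U y := by
    refine le_of_tendsto h.2.2.2.2.2.2.1 ?_
    filter_upwards [eventually_le_atBot y] with x hx
    exact hm hx Set.self_mem_Iic hx
  linarith

lemma IsPTW.lt_of_lt {f U : ℝ → ℝ} {uc v : ℝ} (hf : IsKPP f) (huc : uc ∈ Set.Ioo (0 : ℝ) 1)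
    (hv : 0 ≤ v) (h : IsPTW f uc v U) {x y : ℝ} (hxy : x < y) (hx : U x < 1) : U y < U x := by
  have hs : StrictAntiOn U (Set.Icc x y) := by
    refine strictAntiOn_of_deriv_neg (convex_Icc x y) h.1.continuous.continuousOn ?_
    intro z hz
    exact h.deriv_neg hf huc hv ((h.antitone hf huc hv (interior_subset hz).1).trans_lt hx)
  exact hs (Set.left_mem_Icc.2 hxy.le) (Set.right_mem_Icc.2 hxy.le) hxy

/-- Ahead of the cut-off point the equation integrates to `U' + v U = c`, and decay at `+∞` forces
`c = 0`. -/
lemma IsPTW.deriv_eq {f U : ℝ → ℝ} {uc v : ℝ} (hf : IsKPP f) (huc : uc ∈ Set.Ioo (0 : ℝ) 1)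
    (hv : 0 ≤ v) (h : IsPTW f uc v U) {y : ℝ} (hy : 0 ≤ y) : deriv U y = -(v * U y) := by
  have hconst : ∀ y, 0 ≤ y → deriv U y + v * U y = deriv U 0 + v * U 0 := by
    intro y hy
    have hd : ∀ x, 0 < x → HasDerivAt (fun x => deriv U x + v * U x) 0 x := by
      intro x hx
      have hcut : cutoff f uc (U x) = 0 := by
        unfold cutoff
        exact if_neg (not_lt.2 (h.2.2.2.2.2.1 x hx).2)
      refine ((h.hasDerivAt_deriv hx.ne').add ((h.hasDerivAt x).const_mul v)).congr_deriv ?_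
      rw [hcut]
      ring
    have hc : Continuous fun x => deriv U x + v * U x :=
      h.continuous_deriv.add (continuous_const.mul h.1.continuous)
    rcases hy.eq_or_lt with rfl | hy
    · rfl
    obtain ⟨c, hc1, hc2⟩ := exists_hasDerivAt_eq_slope (fun x => deriv U x + v * U x) (fun _ => 0)
      hy hc.continuousOn (fun x hx => hd x hx.1)
    have : y - 0 ≠ 0 := by linarith
    field_simp at hc2
    linarith
  set c := deriv U 0 + v * U 0 with hcdef
  have hc_nonpos : c ≤ 0 := by
    have ht : Tendsto (fun x => v * U x) atTop (𝓝 0) := by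
      simpa using h.2.2.2.2.2.2.2.const_mul v
    refine ge_of_tendsto ht ?_
    filter_upwards [eventually_ge_atTop 0] with x hx
    have := hconst x hx
    have := h.deriv_nonpos hf huc hv x
    linarith
  have hc0 : c = 0 := by
    refine le_antisymm hc_nonpos ?_
    by_contra! hneg
    -- The slope would be at most `c < 0` on all of `[0, ∞)`, driving `U` below `0`.
    have hpos : 0 < 2 / (-c) := div_pos two_pos (by linarith)
    have := (convex_Ici (0 : ℝ)).image_sub_le_mul_sub_of_deriv_le
      h.1.continuous.continuousOn (h.1.differentiable (by norm_num)).differentiableOn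
      (C := c) (fun x hx => by
        have h1 := hconst x (interior_subset hx)
        have h2 := mul_nonneg hv (h.mem_Icc huc x).1
        linarith) 0 (by simp) (2 / (-c)) hpos.le hpos.le
    have e : c * (2 / (-c) - 0) = -2 := by
      have : c ≠ 0 := hneg.ne
      field_simp
      ring
    have a := (h.mem_Icc huc 0).2
    have b := (h.mem_Icc huc (2 / (-c))).1
    linarith
  have := hconst y hy
  linarith

/-- The trajectory is `P u = -U' (g u)`, where `g` inverts `U` over `(0,1)`; the inverse is
differentiable there because `U' < 0` wherever `U < 1`. -/
lemma exists_isPhase {f U : ℝ → ℝ} {uc v : ℝ} (hf : IsKPP f) (huc : uc ∈ Set.Ioo (0 : ℝ) 1)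
    (hv : 0 ≤ v) (h : IsPTW f uc v U) : ∃ P, IsPhase f uc v P := by
  have hsurj : ∀ u, 0 < u → u < 1 → ∃ y, U y = u := by
    intro u h0 h1
    refine mem_range_of_exists_le_of_exists_ge h.1.continuous ?_ ?_
    · exact (h.2.2.2.2.2.2.2.eventually (eventually_le_nhds h0)).exists
    · exact (h.2.2.2.2.2.2.1.eventually (eventually_ge_nhds h1)).exists
  have hinj : ∀ x y, U x < 1 → U x = U y → x = y := by
    intro x y hx hxy
    rcases lt_trichotomy x y with hlt | heq | hlt
    · have := h.lt_of_lt hf huc hv hlt hx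
      linarith
    · exact heq
    · have := h.lt_of_lt hf huc hv hlt (hxy ▸ hx)
      linarith
  have hex : ∀ u, ∃ y, 0 < u → u < 1 → U y = u := by
    intro u
    by_cases hu : 0 < u ∧ u < 1
    · obtain ⟨y, hy⟩ := hsurj u hu.1 hu.2
      exact ⟨y, fun _ _ => hy⟩
    · exact ⟨0, fun a b => (hu ⟨a, b⟩).elim⟩
  choose g hg using hex
  have hleft : ∀ x, 0 < U x → U x < 1 → g (U x) = x := fun x h0 h1 =>
    (hinj x _ h1 (hg _ h0 h1).symm).symm
  have hgd : ∀ u, 0 < u → u < 1 → HasDerivAt g (deriv U (g u))⁻¹ u := by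
    intro u h0 h1
    have hU := hg u h0 h1
    have hs : HasStrictDerivAt U (deriv U (g u)) (g u) :=
      h.1.contDiffAt.hasStrictDerivAt (by norm_num)
    have hne : deriv U (g u) ≠ 0 := (h.deriv_neg hf huc hv (hU.trans_lt h1)).ne
    have hev : ∀ᶠ x in 𝓝 (g u), g (U x) = x := by
      have hc : ContinuousAt U (g u) := h.1.continuous.continuousAt
      filter_upwards [hc.eventually (Ioo_mem_nhds (hU ▸ h0) (hU ▸ h1))] with x hx
      exact hleft x hx.1 hx.2
    have := (hs.to_local_left_inverse hne hev).hasDerivAt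
    rwa [hU] at this
  refine ⟨fun u => -deriv U (g u), ?_, ?_, ?_, ?_, ?_⟩
  · intro u h0 h1
    exact (h.continuous_deriv.continuousAt.comp (hgd u h0 h1).continuousAt).neg
  · intro u h0 h1
    exact neg_pos.2 (h.deriv_neg hf huc hv ((hg u h0 h1).trans_lt h1))
  · intro u h0 h1
    have hU := hg u h0 (h1.trans_lt huc.2)
    have hy : 0 ≤ g u := by
      by_contra! hy
      have := h.lt_of_lt hf huc hv hy (by rw [hU]; exact h1.trans_lt huc.2)
      rw [h.2.2.2.1] at this
      linarith
    simp only [h.deriv_eq hf huc hv hy, hU, neg_neg]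
  · intro u h0 h1
    have hu0 := huc.1.trans h0
    have hU := hg u hu0 h1
    have hy : g u < 0 := by
      rcases lt_trichotomy (g u) 0 with hy | hy | hy
      · exact hy
      · rw [hy, h.2.2.2.1] at hU
        linarith
      · have := (h.2.2.2.2.2.1 _ hy).2
        linarith
    have hne : deriv U (g u) ≠ 0 := (h.deriv_neg hf huc hv (hU.trans_lt h1)).ne
    have hcut : cutoff f uc (U (g u)) = f u := by
      rw [hU]
      exact if_pos h0
    have h2 := ((h.hasDerivAt_deriv hy.ne).comp u (hgd u hu0 h1)).neg
    rw [hcut] at h2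
    refine h2.congr_deriv ?_
    field_simp
    ring
  · intro δ hδ a ha
    by_contra! hcon
    obtain ⟨y₀, hy₀⟩ := hsurj ((max a 0 + 1) / 2)
      (by have := le_max_right a 0; linarith)
      (by have := max_lt ha one_pos; linarith)
    have hm := max_lt ha one_pos
    have ham : max a 0 < U y₀ := by linarith
    have h1y : U y₀ < 1 := by linarith
    have hsl : ∀ y, y ≤ y₀ → U y < 1 → deriv U y ≤ -δ := by
      intro y hy hy1
      have hlt : max a 0 < U y := ham.trans_le (h.antitone hf huc hv hy)
      have := hcon (U y) ((le_max_left _ _).trans_lt hlt) hy1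
      rw [hleft y ((le_max_right _ _).trans_lt hlt) hy1] at this
      linarith
    have hcrit : ∀ y, U y = 1 → deriv U y = 0 := by
      intro y hy
      refine IsLocalMax.deriv_eq_zero (Eventually.of_forall fun x => ?_)
      rw [hy]
      exact (h.mem_Icc huc x).2
    -- If `U` reached `1`, its slope would pass continuously from `0` to `-δ` where `U < 1`.
    have hlt1 : ∀ y, y ≤ y₀ → U y < 1 := by
      intro y hy
      refine lt_of_le_of_ne (h.mem_Icc huc y).2 fun h1 => ?_
      have hmem : -δ / 2 ∈ Set.Icc (deriv U y₀) (deriv U y) := by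
        rw [hcrit y h1]
        have := hsl y₀ le_rfl h1y
        constructor <;> linarith
      obtain ⟨ξ, hξ, hξ2⟩ := intermediate_value_Icc' hy h.continuous_deriv.continuousOn hmem
      rcases (h.mem_Icc huc ξ).2.lt_or_eq with h3 | h3
      · have := hsl ξ hξ.2 h3
        linarith
      · have := hcrit ξ h3
        linarith
    have hp : 0 < 2 / δ := by positivity
    have := (convex_Iic y₀).image_sub_le_mul_sub_of_deriv_le
      h.1.continuous.continuousOn (h.1.differentiable (by norm_num)).differentiableOn
      (C := -δ) (fun x hx => hsl x (Set.mem_Iic.1 (interior_subset hx))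
        (hlt1 x (Set.mem_Iic.1 (interior_subset hx))))
      (y₀ - 2 / δ) (by simp only [Set.mem_Iic]; linarith) y₀ (by simp) (by linarith)
    have e : -δ * (y₀ - (y₀ - 2 / δ)) = -2 := by field_simp; ring
    have := (h.mem_Icc huc y₀).1
    have := (h.mem_Icc huc (y₀ - 2 / δ)).2
    linarith

/-! ### Comparison of phase trajectories -/

/-- Beyond both cut-offs the trajectory with the larger speed lies below the other one: a positive
gap `P₂ - P₁` would have derivative `(v₂ - v₁) + f (P₂ - P₁) / (P₁ P₂) > 0` and so could not close
at `u = 1`. -/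
lemma IsPhase.le_of_speed_le {f P₁ P₂ : ℝ → ℝ} {c₁ c₂ v₁ v₂ b : ℝ} (hf : IsKPP f) (hc₁ : 0 < c₁)
    (h₁ : IsPhase f c₁ v₁ P₁) (h₂ : IsPhase f c₂ v₂ P₂) (hv : v₁ ≤ v₂)
    (hb₁ : c₁ ≤ b) (hb₂ : c₂ ≤ b) (hb : b < 1) : P₂ b ≤ P₁ b := by
  by_contra! hlt
  have hb0 : 0 < b := hc₁.trans_le hb₁
  -- Moving slightly to the right of `b` makes both differential equations available.
  obtain ⟨d, hbd, hd1, hdlt⟩ : ∃ d, b < d ∧ d < 1 ∧ P₁ d < P₂ d := by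
    have hev : ∀ᶠ x in 𝓝[>] b, P₁ x < P₂ x :=
      ((h₁.cont b hb0 hb).eventually_lt (h₂.cont b hb0 hb) hlt).filter_mono nhdsWithin_le_nhds
    obtain ⟨d, hd, hd2⟩ := (hev.and (Ioo_mem_nhdsGT hb)).exists
    exact ⟨d, hd2.1, hd2.2, hd⟩
  obtain ⟨c, hdc, hc1, hcs⟩ := h₂.small (P₂ d - P₁ d) (by linarith) d hd1
  have hD : ∀ x, d ≤ x → x ≤ c →
      HasDerivAt (fun u => P₁ u - P₂ u) ((v₁ - f x / P₁ x) - (v₂ - f x / P₂ x)) x := by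
    intro x hx hxc
    exact (h₁.ode x (by linarith) (by linarith)).sub (h₂.ode x (by linarith) (by linarith))
  have key := image_le_of_deriv_right_lt_deriv_boundary'
    (f := fun u => P₁ u - P₂ u) (f' := fun x => (v₁ - f x / P₁ x) - (v₂ - f x / P₂ x))
    (a := d) (b := c) (B := fun _ => P₁ d - P₂ d) (B' := fun _ => 0)
    (fun x hx => (hD x hx.1 hx.2).continuousAt.continuousWithinAt)
    (fun x hx => (hD x hx.1 hx.2.le).hasDerivWithinAt) le_rfl continuousOn_const
    (fun x _ => hasDerivWithinAt_const _ _ _)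
    (by
      intro x hx he
      have hx0 : 0 < x := by linarith [hx.1]
      have hx1 : x < 1 := by linarith [hx.2]
      have hp1 := h₁.pos x hx0 hx1
      have hfx := (hf.2.2.2.2.2.1 x hx0 hx1).1
      have hPlt : P₁ x < P₂ x := by
        linarith
      have : f x / P₂ x < f x / P₁ x := div_lt_div_of_pos_left hfx hp1 hPlt
      linarith)
    (Set.right_mem_Icc.2 hdc.le)
  have := h₁.pos c (by linarith) hc1
  linarith

/-- The speed is nonincreasing in the cut-off. -/
lemma IsPhase.speed_le {f P₁ P₂ : ℝ → ℝ} {c₁ c₂ v₁ v₂ : ℝ} (hf : IsKPP f) (hc₁ : 0 < c₁)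
    (hc₂ : c₂ < 1) (h₁ : IsPhase f c₁ v₁ P₁) (h₂ : IsPhase f c₂ v₂ P₂) (hc : c₁ ≤ c₂) :
    v₂ ≤ v₁ := by
  by_contra! hlt
  have hle := h₁.le_of_speed_le hf hc₁ h₂ hlt.le hc le_rfl hc₂
  rw [h₂.lin c₂ (by linarith) le_rfl] at hle
  have hslope := (convex_Icc c₁ c₂).image_sub_le_mul_sub_of_deriv_le (f := P₁) (C := v₁)
    (fun x hx => (h₁.cont x (by linarith [hx.1]) (by linarith [hx.2])).continuousWithinAt)
    (by
      rw [interior_Icc]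
      intro x hx
      exact (h₁.ode x hx.1 (by linarith [hx.2])).differentiableAt.differentiableWithinAt)
    (by
      rw [interior_Icc]
      intro x hx
      have hx0 : 0 < x := by linarith [hx.1]
      have hx1 : x < 1 := by linarith [hx.2]
      rw [(h₁.ode x hx.1 hx1).deriv]
      have := div_pos (hf.2.2.2.2.2.1 x hx0 hx1).1 (h₁.pos x hx0 hx1)
      linarith)
    c₁ (Set.left_mem_Icc.2 hc) c₂ (Set.right_mem_Icc.2 hc) hc
  rw [h₁.lin c₁ hc₁ le_rfl] at hslope
  nlinarith

/-- Quantitative control of the decrease of the speed, obtained from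
`(P₁²)' = 2 v₁ P₁ - 2 f ≥ -2` on `(c₁, c₂)`. -/
lemma IsPhase.sq_speed_le {f P₁ P₂ : ℝ → ℝ} {c₁ c₂ v₁ v₂ : ℝ} (hf : IsKPP f) (hc₁ : 0 < c₁)
    (hc₂ : c₂ < 1) (hv₁ : 0 ≤ v₁) (h₁ : IsPhase f c₁ v₁ P₁) (h₂ : IsPhase f c₂ v₂ P₂)
    (hc : c₁ ≤ c₂) : (v₁ * c₁) ^ 2 - 2 * (c₂ - c₁) ≤ (v₂ * c₂) ^ 2 := by
  have hv := h₁.speed_le hf hc₁ hc₂ h₂ hc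
  have hc₂0 : 0 < c₂ := by linarith
  have hle := h₂.le_of_speed_le hf hc₂0 h₁ hv le_rfl hc hc₂
  have hd : ∀ x, c₁ < x → x < c₂ →
      HasDerivAt (fun u => P₁ u ^ 2) (2 * v₁ * P₁ x - 2 * f x) x := by
    intro x hx hx2
    have hx1 : x < 1 := by linarith
    have hp := h₁.pos x (by linarith) hx1
    refine ((h₁.ode x hx hx1).pow 2).congr_deriv ?_
    field_simp
    ring
  have hslope := (convex_Icc c₁ c₂).mul_sub_le_image_sub_of_le_deriv (f := fun u => P₁ u ^ 2)
    (C := -2)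
    (fun x hx =>
      ((h₁.cont x (by linarith [hx.1]) (by linarith [hx.2])).pow 2).continuousWithinAt)
    (by
      rw [interior_Icc]
      intro x hx
      exact (hd x hx.1 hx.2).differentiableAt.differentiableWithinAt)
    (by
      rw [interior_Icc]
      intro x hx
      have hx0 : 0 < x := by linarith [hx.1]
      have hx1 : x < 1 := by linarith [hx.2]
      rw [(hd x hx.1 hx.2).deriv]
      have := (hf.2.2.2.2.2.1 x hx0 hx1).2
      have := mul_nonneg hv₁ (h₁.pos x hx0 hx1).le
      linarith)
    c₁ (Set.left_mem_Icc.2 hc) c₂ (Set.right_mem_Icc.2 hc) hc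
  have hsq : P₁ c₂ ^ 2 ≤ P₂ c₂ ^ 2 := pow_le_pow_left₀ (h₁.pos c₂ hc₂0 hc₂).le hle 2
  rw [h₂.lin c₂ hc₂0 le_rfl] at hsq
  simp only [h₁.lin c₁ hc₁ le_rfl] at hslope
  linarith

/-- The propagation speed function is continuous on `(0,1)`. -/
theorem vstar_continuous (f : ℝ → ℝ) (hf : IsKPP f) (vstar : ℝ → ℝ)
    (hvstar : ∀ uc ∈ Set.Ioo (0:ℝ) 1, 0 ≤ vstar uc ∧ ∃ U : ℝ → ℝ, IsPTW f uc (vstar uc) U) :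
    ContinuousOn vstar (Set.Ioo (0:ℝ) 1) := by
  have hph : ∀ u ∈ Set.Ioo (0 : ℝ) 1, ∃ P, IsPhase f u (vstar u) P := fun u hu => by
    obtain ⟨hv, U, hU⟩ := hvstar u hu
    exact exists_isPhase hf hu hv hU
  intro u₀ hu₀
  have h0 := hu₀.1
  obtain ⟨P₀, hP₀⟩ := hph u₀ hu₀
  set w := (vstar u₀) ^ 2 with hw
  set φ : ℝ → ℝ := fun u => ((vstar u₀ * u₀) ^ 2 - 2 * (u - u₀)) / u ^ 2 with hφ
  have hφc : ContinuousAt φ u₀ :=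
    ContinuousAt.div (by fun_prop) (by fun_prop) (by positivity)
  have hφ0 : φ u₀ = w := by
    simp only [hφ, hw]
    field_simp
    ring
  have hφt : Tendsto φ (𝓝[Set.Ioo 0 1] u₀) (𝓝 w) := hφ0 ▸ hφc.tendsto.mono_left nhdsWithin_le_nhds
  have hsq : Tendsto (fun u => (vstar u) ^ 2) (𝓝[Set.Ioo 0 1] u₀) (𝓝 w) := by
    have hlo : Tendsto (fun u => min (φ u) w) (𝓝[Set.Ioo 0 1] u₀) (𝓝 w) := by
      simpa using hφt.min (tendsto_const_nhds (x := w))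
    have hhi : Tendsto (fun u => max (φ u) w) (𝓝[Set.Ioo 0 1] u₀) (𝓝 w) := by
      simpa using hφt.max (tendsto_const_nhds (x := w))
    have hbd : ∀ u ∈ Set.Ioo (0 : ℝ) 1,
        min (φ u) w ≤ (vstar u) ^ 2 ∧ (vstar u) ^ 2 ≤ max (φ u) w := by
      intro u hu
      obtain ⟨P, hP⟩ := hph u hu
      have hv := (hvstar u hu).1
      have hv₀ := (hvstar u₀ hu₀).1
      have hu2 : 0 < u ^ 2 := pow_pos hu.1 2
      rcases le_total u₀ u with hle | hle
      · have h1 := hP₀.speed_le hf h0 hu.2 hP hle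
        have h2 := hP₀.sq_speed_le hf h0 hu.2 hv₀ hP hle
        refine ⟨min_le_of_left_le ?_, le_max_of_le_right (pow_le_pow_left₀ hv h1 2)⟩
        rw [hφ, div_le_iff₀ hu2]
        linarith [mul_pow (vstar u) u 2]
      · have h1 := hP.speed_le hf hu.1 hu₀.2 hP₀ hle
        have h2 := hP.sq_speed_le hf hu.1 hu₀.2 hv hP₀ hle
        refine ⟨min_le_of_right_le (pow_le_pow_left₀ hv₀ h1 2), le_max_of_le_left ?_⟩
        rw [hφ, le_div_iff₀ hu2]
        linarith [mul_pow (vstar u) u 2]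
    refine tendsto_of_tendsto_of_tendsto_of_le_of_le' hlo hhi ?_ ?_
    · filter_upwards [self_mem_nhdsWithin] with u hu using (hbd u hu).1
    · filter_upwards [self_mem_nhdsWithin] with u hu using (hbd u hu).2
  have hs := hsq.sqrt
  rw [hw, sqrt_sq (hvstar u₀ hu₀).1] at hs
  refine hs.congr' ?_
  filter_upwards [self_mem_nhdsWithin] with u hu using sqrt_sq (hvstar u hu).1
end

section
/- Let f be a KPP reaction function and let U_m : ℝ → ℝ be the unique twice continuously differentiable solution of the minimum-speed travelling wave problem without cut-off: U_m'' + 2 U_m' + f(U_m) = 0 on ℝ, 0 < U_m(y) < 1 for all y, U_m(y) → 1 as y → −∞, U_m(y) → 0 as y → +∞, normalized by U_m(0) = 1/2. Assume the limits A_∞ = lim_{y→∞} e^{y} U_m(y)/y and B_∞ = lim_{y→∞} ( e^{y} U_m(y) − A_∞ y ) exist with A_∞ > 0. Then the propagation speed of the cut-off problem satisfies the three-term asymptotic expansion: (ln u_c)³ · ( v*(u_c) − 2 + π²/(ln u_c)² ) → −2π² ( (A_∞ + B_∞)/A_∞ + ln A_∞ ) as u_c → 0⁺; equivalently, v*(u_c)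 = 2 − π²/(ln u_c)² − 2π²((A_∞ + B_∞)/A_∞ + ln A_∞)/(ln u_c)³ + o(1/|ln u_c|³) as u_c → 0⁺. -/
/-!
A decreasing front is described by its phase-plane orbit `p(U) = -U'`, which solves
`dp/du = v - f(u)/p` and leaves the equilibrium `u = 1`. Ahead of the cut-off the wave is the
exponential `u_c e^{-v y}`, so a cut-off wave of speed `v` is an orbit `P` over `(c, 1)` with
`P(c) = v c` (`exists_cutoffOrbit`); the speed is then determined by how long the orbit takes to
turn up to the ray `p = v u`.

Put `t = log (1/u)`, `s = P/u - v/2`, `ω² = 1 - v²/4` and `η(u) = 1 - f(u)/u`. Comparison with the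
minimal-speed orbit gives `v < 2` (`speed_lt_two`), and `s` satisfies a Riccati equation in `t`
which, apart from `η`, is solved by `t = phase(s) + const`. Precisely
`d/dt (t - phase(s)) = η / (s² + ω²)`, and likewise
`d/dt (t - phaseZero(s₀)) = η / s₀²` along the minimal-speed orbit `p`, where `s₀ = p/u - 1`.

For the minimal-speed wave set `W = e^y U_m`. Then `log (1/u) = y - log W` and `s₀ = -W'/W`; since
`W'' = e^y (U_m - f(U_m)) ≥ 0`, the convergence `W - A y → B` improves to `y (A - W') → 0`, whence
`t - phaseZero(s₀) → -B/A - log A` (`exists_minimal_orbit`). Thus `η / s₀²` has a finite integral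
up to `t = ∞`. A barrier argument (`slope_sq_add_lower`) bounds `s² + ω²` below by a multiple of
`1/t²`, hence of `s₀²`, uniformly in the speed, so the defect of a cut-off orbit beyond a fixed
small height `u₀` is uniformly small (`phase_defect_bounds`). At height `u₀` itself the cut-off
orbits converge to the minimal one, because `p² ≤ P² ≤ p² + (2 - v)`
(`orbit_le`, `orbit_sq_le`).

At `u₀` the slope `s` is negative and at the cut-off it is `v/2`. As `ω → 0`, the term
`v/(2ω) arctan(s/ω)` of the phase therefore grows by `(v/2) π/ω`, up to corrections which converge
to `phaseZero(s₀)` and `-1`. This gives `log (1/c) = (v/2) π/ω - K + o(1)` with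
`K = (A + B)/A + log A` (`tendsto_log_add_phase`), and solving for `v` yields the expansion
(`tendsto_cube_of_tendsto_phase`).
-/

open Real Filter Topology

/-! ### Monotonicity and barrier tools -/

lemma le_of_hasDerivAt_nonneg {F F' : ℝ → ℝ} {a b : ℝ} (hab : a ≤ b)
    (hc : ContinuousOn F (Set.Icc a b)) (hd : ∀ x ∈ Set.Ioo a b, HasDerivAt F (F' x) x)
    (h0 : ∀ x ∈ Set.Ioo a b, 0 ≤ F' x) : F a ≤ F b := by
  have := monotoneOn_of_hasDerivWithinAt_nonneg (f := F) (f' := F') (convex_Icc a b) hc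
    (by rw [interior_Icc]; exact fun x hx => (hd x hx).hasDerivWithinAt)
    (by rw [interior_Icc]; exact h0)
  exact this (Set.left_mem_Icc.2 hab) (Set.right_mem_Icc.2 hab) hab

lemma ge_of_hasDerivAt_nonpos {F F' : ℝ → ℝ} {a b : ℝ} (hab : a ≤ b)
    (hc : ContinuousOn F (Set.Icc a b)) (hd : ∀ x ∈ Set.Ioo a b, HasDerivAt F (F' x) x)
    (h0 : ∀ x ∈ Set.Ioo a b, F' x ≤ 0) : F b ≤ F a := by
  have := antitoneOn_of_hasDerivWithinAt_nonpos (f := F) (f' := F') (convex_Icc a b) hc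
    (by rw [interior_Icc]; exact fun x hx => (hd x hx).hasDerivWithinAt)
    (by rw [interior_Icc]; exact h0)
  exact this (Set.left_mem_Icc.2 hab) (Set.right_mem_Icc.2 hab) hab

/-- A function that strictly decreases wherever it is negative cannot be negative anywhere if it
tends to `0` at the right end point. -/
lemma nonneg_of_decreasing_where_neg {E E' : ℝ → ℝ} {a : ℝ}
    (hd : ∀ u ∈ Set.Ioo a 1, HasDerivAt E (E' u) u) (hlim : Tendsto E (𝓝[<] 1) (𝓝 0))
    (hneg : ∀ u ∈ Set.Ioo a 1, E u < 0 → E' u < 0) : ∀ u ∈ Set.Ioo a 1, 0 ≤ E u := by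
  intro u hu
  by_contra! hlt
  have key : ∀ b ∈ Set.Ioo u 1, E b ≤ E u := by
    intro b hb
    have hsub : ∀ x ∈ Set.Icc u b, x ∈ Set.Ioo a 1 := fun x hx =>
      ⟨hu.1.trans_le hx.1, hx.2.trans_lt hb.2⟩
    refine image_le_of_deriv_right_lt_deriv_boundary' (f := E) (f' := E') (B := fun _ => E u)
      (B' := fun _ => 0) (a := u) (b := b)
      (fun x hx => (hd x (hsub x hx)).continuousAt.continuousWithinAt)
      (fun x hx => (hd x (hsub x ⟨hx.1, hx.2.le⟩)).hasDerivWithinAt) le_rfl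
      continuousOn_const (fun x _ => hasDerivWithinAt_const _ _ _)
      (fun x hx h => hneg x (hsub x ⟨hx.1, hx.2.le⟩) (by rw [h]; exact hlt))
      ⟨hb.1.le, le_rfl⟩
  have : (0 : ℝ) ≤ E u := by
    refine le_of_tendsto hlim ?_
    filter_upwards [Ioo_mem_nhdsLT hu.2] with b hb using key b hb
  linarith

/-! ### Phase-plane orbits -/

/-- The graph of `p` is, over `(a, 1)`, the phase-plane trajectory `p(U) = -U'` of a decreasing
solution of `U'' + v U' + f(U) = 0` that leaves the equilibrium `U = 1`. -/
def IsOrbit (f : ℝ → ℝ) (v a : ℝ) (p : ℝ → ℝ) : Prop :=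
  (∀ u ∈ Set.Ioo a 1, 0 < p u ∧ HasDerivAt p (v - f u / p u) u) ∧ Tendsto p (𝓝[<] 1) (𝓝 0)

lemma hasDerivAt_sq_sub_sq {f p P : ℝ → ℝ} {v w u : ℝ} (hp : 0 < p u) (hP : 0 < P u)
    (hp' : HasDerivAt p (w - f u / p u) u) (hP' : HasDerivAt P (v - f u / P u) u) :
    HasDerivAt (fun u => P u ^ 2 - p u ^ 2) (2 * (v * P u - w * p u)) u := by
  refine ((hP'.pow 2).sub (hp'.pow 2)).congr_deriv ?_
  field_simp
  ring

section Comparison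

variable {f p P : ℝ → ℝ} {v c : ℝ}

lemma tendsto_sq_sub_sq (hp : Tendsto p (𝓝[<] 1) (𝓝 0)) (hP : Tendsto P (𝓝[<] 1) (𝓝 0)) :
    Tendsto (fun u => P u ^ 2 - p u ^ 2) (𝓝[<] 1) (𝓝 0) := by
  simpa using (hP.pow 2).sub (hp.pow 2)

/-- The cut-off speed is below the minimal speed `2`. If `v ≥ 2`, the orbit `P` lies below the
minimal-speed orbit `p`, which contradicts `p(c) < c < v c = P(c)`. -/
lemma speed_lt_two (hc : c ∈ Set.Ioo (0 : ℝ) 1) (hp : IsOrbit f 2 0 p)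
    (hpu : ∀ u ∈ Set.Ioo (0 : ℝ) 1, p u < u) (hP : IsOrbit f v c P)
    (hPc : ContinuousOn P (Set.Ico c 1)) (hPv : P c = v * c) : v < 2 := by
  by_contra! hv
  have hsub : ∀ u ∈ Set.Ioo c 1, u ∈ Set.Ioo (0 : ℝ) 1 := fun u hu => ⟨hc.1.trans hu.1, hu.2⟩
  have hE := nonneg_of_decreasing_where_neg (a := c) (E := fun u => p u ^ 2 - P u ^ 2)
    (fun u hu => hasDerivAt_sq_sub_sq (hP.1 u hu).1 (hp.1 u (hsub u hu)).1
      (hP.1 u hu).2 (hp.1 u (hsub u hu)).2) (tendsto_sq_sub_sq hP.2 hp.2) (by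
      intro u hu h
      have h1 := (hP.1 u hu).1
      have h2 := (hp.1 u (hsub u hu)).1
      have : p u < P u := by nlinarith
      nlinarith)
  have hle : ∀ u ∈ Set.Ioo c 1, P u ≤ p u := fun u hu => by
    have h1 := (hP.1 u hu).1
    have h2 := (hp.1 u (hsub u hu)).1
    have : 0 ≤ p u ^ 2 - P u ^ 2 := hE u hu
    nlinarith
  have h1 : Tendsto P (𝓝[>] c) (𝓝 (P c)) :=
    ((hPc c ⟨le_rfl, hc.2⟩).mono_left (nhdsWithin_le_of_mem (by
      filter_upwards [Ioo_mem_nhdsGT hc.2] with u hu using ⟨hu.1.le, hu.2⟩)))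
  have h2 : Tendsto p (𝓝[>] c) (𝓝 (p c)) :=
    (hp.1 c hc).2.continuousAt.tendsto.mono_left nhdsWithin_le_nhds
  have h3 : P c ≤ p c := le_of_tendsto_of_tendsto h1 h2 (by
    filter_upwards [Ioo_mem_nhdsGT hc.2] with u hu using hle u hu)
  have h4 := hpu c hc
  have := hc.1
  nlinarith

/-- Lowering the speed raises the orbit. -/
lemma orbit_le (hc : 0 ≤ c) (hv : v < 2) (hp : IsOrbit f 2 0 p) (hP : IsOrbit f v c P) :
    ∀ u ∈ Set.Ioo c 1, p u ≤ P u := by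
  have hsub : ∀ u ∈ Set.Ioo c 1, u ∈ Set.Ioo (0 : ℝ) 1 := fun u hu => ⟨hc.trans_lt hu.1, hu.2⟩
  have hE := nonneg_of_decreasing_where_neg (a := c) (E := fun u => P u ^ 2 - p u ^ 2)
    (fun u hu => hasDerivAt_sq_sub_sq (hp.1 u (hsub u hu)).1 (hP.1 u hu).1
      (hp.1 u (hsub u hu)).2 (hP.1 u hu).2) (tendsto_sq_sub_sq hp.2 hP.2) (by
      intro u hu h
      have h1 := (hP.1 u hu).1
      have h2 := (hp.1 u (hsub u hu)).1
      have : P u < p u := by nlinarith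
      nlinarith)
  intro u hu
  have h1 := (hP.1 u hu).1
  have h2 := (hp.1 u (hsub u hu)).1
  have : 0 ≤ P u ^ 2 - p u ^ 2 := hE u hu
  nlinarith

/-- Quantitative continuity of the orbit in the speed: `(P² - p²)' = 2 (v P - 2 p)` is at least
`-2 (2 - v) u`, and `P² - p²` vanishes at `u = 1`. -/
lemma orbit_sq_le (hc : 0 ≤ c) (hv : v < 2) (hv0 : 0 ≤ v) (hp : IsOrbit f 2 0 p)
    (hpu : ∀ u ∈ Set.Ioo (0 : ℝ) 1, p u < u) (hP : IsOrbit f v c P) :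
    ∀ u ∈ Set.Ioo c 1, P u ^ 2 ≤ p u ^ 2 + (2 - v) := by
  have hsub : ∀ u ∈ Set.Ioo c 1, u ∈ Set.Ioo (0 : ℝ) 1 := fun u hu => ⟨hc.trans_lt hu.1, hu.2⟩
  have hle := orbit_le hc hv hp hP
  have hd : ∀ u ∈ Set.Ioo c 1, HasDerivAt (fun u => (P u ^ 2 - p u ^ 2) + (2 - v) * u ^ 2)
      (2 * (v * P u - 2 * p u) + (2 - v) * (2 * u)) u := fun u hu => by
    have := (hasDerivAt_sq_sub_sq (hp.1 u (hsub u hu)).1 (hP.1 u hu).1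
      (hp.1 u (hsub u hu)).2 (hP.1 u hu).2).add (((hasDerivAt_id u).pow 2).const_mul (2 - v))
    exact this.congr_deriv (by simp)
  intro u hu
  have hlim : Tendsto (fun u => (P u ^ 2 - p u ^ 2) + (2 - v) * u ^ 2) (𝓝[<] 1)
      (𝓝 (0 + (2 - v) * 1 ^ 2)) :=
    (tendsto_sq_sub_sq hp.2 hP.2).add
      ((((continuous_id.pow 2).tendsto 1).mono_left nhdsWithin_le_nhds).const_mul _)
  have key : (P u ^ 2 - p u ^ 2) + (2 - v) * u ^ 2 ≤ 0 + (2 - v) * 1 ^ 2 := by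
    refine ge_of_tendsto hlim ?_
    filter_upwards [Ioo_mem_nhdsLT hu.2] with b hb
    have hs : ∀ x ∈ Set.Icc u b, x ∈ Set.Ioo c 1 := fun x hx =>
      ⟨hu.1.trans_le hx.1, hx.2.trans_lt hb.2⟩
    refine le_of_hasDerivAt_nonneg hb.1.le
      (fun x hx => (hd x (hs x hx)).continuousAt.continuousWithinAt)
      (fun x hx => hd x (hs x (Set.Ioo_subset_Icc_self hx))) (fun x hx => ?_)
    have hx' := hs x (Set.Ioo_subset_Icc_self hx)
    have h1 := hle x hx'
    have h2 := hpu x (hsub x hx')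
    nlinarith
  nlinarith [sq_nonneg u]

lemma orbit_le_speed_mul (hc : c ∈ Set.Ioo (0 : ℝ) 1)
    (hf0 : ∀ u ∈ Set.Ioo (0 : ℝ) 1, 0 ≤ f u) (hP : IsOrbit f v c P)
    (hPc : ContinuousOn P (Set.Ico c 1)) (hPv : P c = v * c) :
    ∀ u ∈ Set.Ico c 1, P u ≤ v * u := by
  intro u hu
  have : P u - v * u ≤ P c - v * c := ge_of_hasDerivAt_nonpos (F := fun u => P u - v * u) (F' := fun u => v - f u / P u - v)
    hu.1 ((hPc.mono (fun x hx => ⟨hx.1, hx.2.trans_lt hu.2⟩)).sub (by fun_prop))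
    (fun x hx => by
      exact ((hP.1 x ⟨hx.1, hx.2.trans hu.2⟩).2.sub
        ((hasDerivAt_id x).const_mul v)).congr_deriv (by simp))
    (fun x hx => by
      have h1 := (hP.1 x ⟨hx.1, hx.2.trans hu.2⟩).1
      have h2 := hf0 x ⟨hc.1.trans hx.1, hx.2.trans hu.2⟩
      have : 0 ≤ f x / P x := by positivity
      linarith)
  linarith

/-- The logarithmic slope `q = p/u` satisfies a Riccati equation in `log u`; `1 - f u / u` is
the relative deviation of `f` from its linearisation at `0`. -/
lemma hasDerivAt_slope {u : ℝ} (hu : 0 < u) (hP : 0 < P u)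
    (hP' : HasDerivAt P (v - f u / P u) u) :
    HasDerivAt (fun u => P u / u - v / 2)
      (-((P u / u - v / 2) ^ 2 + (1 - v ^ 2 / 4) - (1 - f u / u)) / (P u / u * u)) u := by
  refine ((hP'.div (hasDerivAt_id u) hu.ne').sub_const (v / 2)).congr_deriv ?_
  simp only [id]
  field_simp
  ring

end Comparison

/-- The phase-plane orbit of a cut-off wave of speed `v`: an orbit over `(c, 1)` that meets the
ray `p = v u`, the trajectory of the decaying exponential ahead of the cut-off, at `u = c`. -/
def IsCutoffOrbit (f : ℝ → ℝ) (v c : ℝ) (P : ℝ → ℝ) : Prop :=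
  IsOrbit f v c P ∧ ContinuousOn P (Set.Ico c 1) ∧ P c = v * c

/-- If `1 - v²/4` stays above `ε`, the slope `P/u` varies at rate at least `ε/4` in `log u`
where `f` is nearly linear; as it stays in `[0, 2]`, `log (1/c)` is bounded. -/
lemma log_le_of_speed_gap {f P : ℝ → ℝ} {v c u₁ ε : ℝ} (hε : 0 < ε) (hc : 0 < c) (hcu : c < u₁)
    (hu₁ : u₁ < 1) (hf0 : ∀ u ∈ Set.Ioo (0 : ℝ) 1, 0 ≤ f u)
    (hη : ∀ u ∈ Set.Ioo 0 u₁, 1 - f u / u ≤ ε / 2) (hv : v < 2)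
    (hgap : ε ≤ 1 - v ^ 2 / 4) (hP : IsCutoffOrbit f v c P) :
    ε / 4 * (log u₁ - log c) ≤ 2 := by
  obtain ⟨hP, hPc, hPv⟩ := hP
  have hle := orbit_le_speed_mul ⟨hc, hcu.trans hu₁⟩ hf0 hP hPc hPv
  have key : P u₁ / u₁ - v / 2 + ε / 4 * log u₁ ≤ P c / c - v / 2 + ε / 4 * log c := by
    refine ge_of_hasDerivAt_nonpos (F := fun u => P u / u - v / 2 + ε / 4 * log u)
      (F' := fun u => -((P u / u - v / 2) ^ 2 + (1 - v ^ 2 / 4) - (1 - f u / u)) / (P u / u * u)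
        + ε / 4 * u⁻¹) hcu.le ?_ (fun u hu => ?_) (fun u hu => ?_)
    · have h0 : ∀ u ∈ Set.Icc c u₁, u ≠ 0 := fun u hu => (hc.trans_le hu.1).ne'
      have hP1 : ContinuousOn P (Set.Icc c u₁) := hPc.mono fun u hu => ⟨hu.1, hu.2.trans_lt hu₁⟩
      exact ((hP1.div continuousOn_id h0).sub continuousOn_const).add
        (continuousOn_const.mul (continuousOn_log.mono h0))
    · have hu0 : 0 < u := hc.trans hu.1
      have hu' : u ∈ Set.Ioo c 1 := ⟨hu.1, hu.2.trans hu₁⟩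
      exact (hasDerivAt_slope hu0 (hP.1 u hu').1 (hP.1 u hu').2).add
        ((hasDerivAt_log hu0.ne').const_mul _)
    · have hu0 : 0 < u := hc.trans hu.1
      have hu' : u ∈ Set.Ioo c 1 := ⟨hu.1, hu.2.trans hu₁⟩
      have hPpos := (hP.1 u hu').1
      have h1 := hle u ⟨hu.1.le, hu'.2⟩
      have h2 := hη u ⟨hu0, hu.2⟩
      have h3 : P u / u * u = P u := by field_simp
      have h4 := sq_nonneg (P u / u - v / 2)
      rw [h3, neg_div, neg_add_nonpos_iff]
      rw [← div_eq_mul_inv, div_le_div_iff₀ hu0 hPpos]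
      have h5 : ε / 2 * u ≤ ((P u / u - v / 2) ^ 2 + (1 - v ^ 2 / 4) - (1 - f u / u)) * u :=
        mul_le_mul_of_nonneg_right (by linarith) hu0.le
      have h6 : P u ≤ 2 * u := by nlinarith
      nlinarith
  have h1 : P c / c = v := by rw [hPv]; field_simp
  have h2 : 0 < P u₁ / u₁ := div_pos (hP.1 u₁ ⟨hcu, hu₁⟩).1 (hc.trans hcu)
  rw [h1] at key
  nlinarith

/-- With `t = -log u`, the slope `s = P/u - v/2` satisfies `ds/dt ≤ 2 (s² + ω²)`, and `-1/(4t)`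
is a barrier for this inequality as long as `ω t < 1/4`. Hence `s ≤ -1/(4t)` there, while
`ω ≥ 1/(4t)` beyond. -/
lemma slope_sq_add_lower {f P : ℝ → ℝ} {v c u₀ ω : ℝ} (hc : 0 < c) (hu₀ : u₀ < 1)
    (hω : 0 < ω) (hωv : ω ^ 2 = 1 - v ^ 2 / 4)
    (hf1 : ∀ u ∈ Set.Ioo (0 : ℝ) 1, f u ≤ u) (hP : IsOrbit f v c P)
    (hq : ∀ u ∈ Set.Ioc c u₀, 1 / 2 ≤ P u / u)
    (hs₀ : P u₀ / u₀ - v / 2 ≤ 1 / (4 * log u₀)) :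
    ∀ u ∈ Set.Ioo c u₀, 1 / (16 * log u ^ 2) ≤ (P u / u - v / 2) ^ 2 + ω ^ 2 := by
  intro u hu
  have hu0 : 0 < u := hc.trans hu.1
  have hlt : log u < log u₀ := log_lt_log hu0 hu.2
  have hl0 : log u₀ < 0 := log_neg (hu0.trans hu.2) hu₀
  have hl : log u < 0 := hlt.trans hl0
  by_cases hcase : 1 / 4 ≤ ω * (-log u)
  · have : 1 / (16 * log u ^ 2) ≤ ω ^ 2 := by
      have := pow_pos (neg_pos.2 hl) 2
      rw [neg_sq] at this
      rw [div_le_iff₀ (by positivity)]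
      nlinarith
    nlinarith [sq_nonneg (P u / u - v / 2)]
  push Not at hcase
  have hmem : ∀ t ∈ Set.Icc (-log u₀) (-log u), exp (-t) ∈ Set.Icc u u₀ := by
    intro t ht
    refine ⟨?_, ?_⟩
    · rw [← log_le_log_iff hu0 (exp_pos _), log_exp]; linarith [ht.2]
    · rw [← log_le_log_iff (exp_pos _) (hu0.trans hu.2), log_exp]; linarith [ht.1]
  have hder : ∀ t ∈ Set.Icc (-log u₀) (-log u),
      HasDerivAt (fun t => P (exp (-t)) / exp (-t) - v / 2)
        (((P (exp (-t)) / exp (-t) - v / 2) ^ 2 + ω ^ 2 - (1 - f (exp (-t)) / exp (-t))) /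
          (P (exp (-t)) / exp (-t))) t := by
    intro t ht
    have hm := hmem t ht
    have hm' : exp (-t) ∈ Set.Ioo c 1 := ⟨hu.1.trans_le hm.1, hm.2.trans_lt hu₀⟩
    have h1 := hasDerivAt_slope (exp_pos (-t)) (hP.1 _ hm').1 (hP.1 _ hm').2
    have h2 : HasDerivAt (fun t => exp (-t)) (-exp (-t)) t := by
      simpa using (hasDerivAt_id t).neg.exp
    have h3 := h1.comp t h2
    refine h3.congr_deriv ?_
    have := (hP.1 _ hm').1
    rw [hωv]
    field_simp
  have hbar : P (exp (- -log u)) / exp (- -log u) - v / 2 ≤ -(1 / (4 * (-log u))) := by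
    refine image_le_of_deriv_right_lt_deriv_boundary'
      (f := fun t => P (exp (-t)) / exp (-t) - v / 2) (B := fun t => -(1 / (4 * t)))
      (B' := fun t => 1 / (4 * t ^ 2)) (a := -log u₀) (b := -log u)
      (fun t ht => (hder t ht).continuousAt.continuousWithinAt)
      (fun t ht => (hder t ⟨ht.1, ht.2.le⟩).hasDerivWithinAt) ?_ ?_ ?_ ?_
      ⟨by linarith, le_rfl⟩
    · simp only [neg_neg, exp_log (hu0.trans hu.2)]
      refine hs₀.trans (le_of_eq ?_)
      field_simp
    · intro t ht
      have : t ≠ 0 := by linarith [ht.1]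
      have : (4 : ℝ) * t ≠ 0 := by positivity
      refine ContinuousAt.continuousWithinAt ?_
      fun_prop (disch := assumption)
    · intro t ht
      have ht0 : t ≠ 0 := by linarith [ht.1]
      refine HasDerivAt.hasDerivWithinAt ?_
      refine (((hasDerivAt_const t (1 : ℝ)).div ((hasDerivAt_id t).const_mul 4)
        (by simpa using ht0)).neg).congr_deriv ?_
      simp only [id]
      field_simp
      ring
    · intro t ht h
      have ht0 : 0 < t := by linarith [ht.1]
      have hm := hmem t ⟨ht.1, ht.2.le⟩
      have hqt := hq (exp (-t)) ⟨hu.1.trans_le hm.1, hm.2⟩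
      have hft := hf1 (exp (-t)) ⟨exp_pos _, hm.2.trans_lt hu₀⟩
      have hη : f (exp (-t)) / exp (-t) ≤ 1 := by rwa [div_le_one (exp_pos _)]
      rw [h, div_lt_iff₀ (by linarith)]
      have h1 : ω * t < 1 / 4 := by nlinarith [ht.2]
      have h2 : ω ^ 2 * (16 * t ^ 2) < 1 := by nlinarith [mul_pos hω ht0]
      have h3 : ω ^ 2 < 1 / (16 * t ^ 2) := by rwa [lt_div_iff₀ (by positivity)]
      have h4 : (-(1 / (4 * t))) ^ 2 = 1 / (16 * t ^ 2) := by field_simp; norm_num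
      have h5 : 1 / (4 * t ^ 2) = 4 * (1 / (16 * t ^ 2)) := by field_simp; norm_num
      have h6 : 0 < 1 / (16 * t ^ 2) := by positivity
      rw [h4, h5]
      nlinarith
  rw [neg_neg, exp_log hu0] at hbar
  have h1 : -(1 / (4 * (-log u))) < 0 := by
    have : 0 < -log u := by linarith
    have : 0 < 1 / (4 * (-log u)) := by positivity
    linarith
  have h2 : (-(1 / (4 * (-log u)))) ^ 2 = 1 / (16 * log u ^ 2) := by
    field_simp; norm_num
  rw [← h2]
  nlinarith [sq_nonneg ω]

/-- A primitive of `(s + v/2) / (s² + ω²)`: the increment of `log (1/u)` along an orbit of the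
linearised equation, as a function of the slope. -/
noncomputable def phase (v ω s : ℝ) : ℝ :=
  v / (2 * ω) * arctan (s / ω) + 1 / 2 * log (s ^ 2 + ω ^ 2)

/-- A primitive of `(s + 1) / s²` on `s < 0`, the limiting form of `phase` at `v = 2`, `ω = 0`. -/
noncomputable def phaseZero (s : ℝ) : ℝ := -1 / s + log (-s)

lemma hasDerivAt_phase {v ω s : ℝ} (hω : 0 < ω) :
    HasDerivAt (phase v ω) ((s + v / 2) / (s ^ 2 + ω ^ 2)) s := by
  have hpos : 0 < s ^ 2 + ω ^ 2 := by positivity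
  have h1 : HasDerivAt (fun s => arctan (s / ω)) (1 / (1 + (s / ω) ^ 2) * (1 / ω)) s :=
    ((hasDerivAt_id s).div_const ω).arctan
  have h2 : HasDerivAt (fun s => log (s ^ 2 + ω ^ 2)) ((2 * s) / (s ^ 2 + ω ^ 2)) s :=
    HasDerivAt.log (((hasDerivAt_id s).pow 2).add_const _ |>.congr_deriv (by simp)) hpos.ne'
  refine ((h1.const_mul (v / (2 * ω))).add (h2.const_mul (1 / 2))).congr_deriv ?_
  have h3 : 1 + (s / ω) ^ 2 = (s ^ 2 + ω ^ 2) / ω ^ 2 := by field_simp; ring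
  rw [h3]
  field_simp
  ring

lemma hasDerivAt_phaseZero {s : ℝ} (hs : s < 0) :
    HasDerivAt phaseZero ((s + 1) / s ^ 2) s := by
  have h1 : HasDerivAt (fun s : ℝ => -1 / s) (1 / s ^ 2) s := by
    refine ((hasDerivAt_const s (-1 : ℝ)).div (hasDerivAt_id s) hs.ne).congr_deriv ?_
    simp
  have h2 : HasDerivAt (fun s : ℝ => log (-s)) (1 / s) s := by
    refine ((hasDerivAt_id s).neg.log (by simpa using hs.ne)).congr_deriv ?_
    simp
  refine (h1.add h2).congr_deriv ?_
  have := hs.ne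
  field_simp
  ring

/-- `log (1/u)` minus the phase changes only through the nonlinearity. -/
lemma hasDerivAt_phase_defect {f P : ℝ → ℝ} {v ω u : ℝ} (hω : 0 < ω)
    (hωv : ω ^ 2 = 1 - v ^ 2 / 4) (hu : 0 < u) (hP : 0 < P u)
    (hP' : HasDerivAt P (v - f u / P u) u) :
    HasDerivAt (fun u => -log u - phase v ω (P u / u - v / 2))
      (-((1 - f u / u) / (((P u / u - v / 2) ^ 2 + ω ^ 2) * u))) u := by
  have h1 := (hasDerivAt_phase (v := v) (s := P u / u - v / 2) hω).comp u
    (hasDerivAt_slope hu hP hP')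
  refine ((hasDerivAt_log hu.ne').neg.sub h1).congr_deriv ?_
  have hpos : 0 < (P u / u - v / 2) ^ 2 + ω ^ 2 := by positivity
  have hq : 0 < P u / u := div_pos hP hu
  rw [← hωv]
  generalize 1 - f u / u = η
  have : P u / u - v / 2 + v / 2 = P u / u := by ring
  rw [this]
  generalize hS : (P u / u - v / 2) ^ 2 + ω ^ 2 = S at *
  generalize P u / u = q at *
  field_simp
  ring

lemma hasDerivAt_phaseZero_defect {f p : ℝ → ℝ} {u : ℝ} (hu : 0 < u) (hp : 0 < p u)
    (hs : p u < u) (hp' : HasDerivAt p (2 - f u / p u) u) :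
    HasDerivAt (fun u => -log u - phaseZero (p u / u - 1))
      (-((1 - f u / u) / ((p u / u - 1) ^ 2 * u))) u := by
  have hs' : p u / u - 1 < 0 := by rw [sub_neg, div_lt_one hu]; exact hs
  have h0 := hasDerivAt_slope hu hp hp'
  rw [div_self two_ne_zero] at h0
  have h1 := HasDerivAt.comp u (h₂ := phaseZero) (h := fun u => p u / u - 1)
    (hasDerivAt_phaseZero hs') h0
  refine ((hasDerivAt_log hu.ne').neg.sub h1).congr_deriv ?_
  have hpos : (p u / u - 1) ≠ 0 := hs'.ne
  have hq : 0 < p u / u := div_pos hp hu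
  rw [show p u / u - 1 + 1 = p u / u by ring]
  generalize hη : 1 - f u / u = η at *
  generalize p u / u - 1 = s at *
  generalize p u / u = q at *
  field_simp
  ring

/-- The phase defect of a cut-off orbit is controlled, uniformly in the speed, by that of the
minimal-speed orbit: its derivative has the numerator `1 - f u / u` in common with the latter, and
the denominators satisfy `(p/u - 1)² ≤ 64 (s² + ω²)`. -/
lemma phase_defect_bounds {f p P : ℝ → ℝ} {v c u₀ ω : ℝ} (hc : 0 < c) (hcu : c < u₀)
    (hu₀ : u₀ < 1) (hω : 0 < ω) (hωv : ω ^ 2 = 1 - v ^ 2 / 4)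
    (hf1 : ∀ u ∈ Set.Ioo (0 : ℝ) 1, f u ≤ u) (hp : IsOrbit f 2 0 p)
    (hpu : ∀ u ∈ Set.Ioo (0 : ℝ) 1, p u < u) (hP : IsCutoffOrbit f v c P)
    (hq : ∀ u ∈ Set.Ioc c u₀, 1 / 2 ≤ P u / u)
    (hs₀ : P u₀ / u₀ - v / 2 ≤ 1 / (4 * log u₀))
    (hm : ∀ u ∈ Set.Ioo 0 u₀, (p u / u - 1) ^ 2 * log u ^ 2 ≤ 4) :
    -log u₀ - phase v ω (P u₀ / u₀ - v / 2) ≤ -log c - phase v ω (P c / c - v / 2) ∧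
    -log c - phase v ω (P c / c - v / 2) ≤ -log u₀ - phase v ω (P u₀ / u₀ - v / 2) +
      64 * ((-log c - phaseZero (p c / c - 1)) - (-log u₀ - phaseZero (p u₀ / u₀ - 1))) := by
  obtain ⟨hP, hPc, -⟩ := hP
  have h0 : ∀ u ∈ Set.Icc c u₀, u ≠ 0 := fun u hu => (hc.trans_le hu.1).ne'
  have hcont : ContinuousOn (fun u => -log u - phase v ω (P u / u - v / 2)) (Set.Icc c u₀) := by
    have hph : Continuous (phase v ω) :=
      continuous_iff_continuousAt.2 fun s => (hasDerivAt_phase hω).continuousAt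
    have hP1 : ContinuousOn P (Set.Icc c u₀) := hPc.mono fun u hu => ⟨hu.1, hu.2.trans_lt hu₀⟩
    exact (continuousOn_log.mono h0).neg.sub
      (hph.comp_continuousOn ((hP1.div continuousOn_id h0).sub continuousOn_const))
  have hd : ∀ u ∈ Set.Ioo c u₀, HasDerivAt (fun u => -log u - phase v ω (P u / u - v / 2))
      (-((1 - f u / u) / (((P u / u - v / 2) ^ 2 + ω ^ 2) * u))) u := fun u hu =>
    hasDerivAt_phase_defect hω hωv (hc.trans hu.1) (hP.1 u ⟨hu.1, hu.2.trans hu₀⟩).1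
      (hP.1 u ⟨hu.1, hu.2.trans hu₀⟩).2
  have hd0 : ∀ u ∈ Set.Icc c u₀, HasDerivAt (fun u => -log u - phaseZero (p u / u - 1))
      (-((1 - f u / u) / ((p u / u - 1) ^ 2 * u))) u := fun u hu => by
    have hu' : u ∈ Set.Ioo (0 : ℝ) 1 := ⟨hc.trans_le hu.1, hu.2.trans_lt hu₀⟩
    exact hasDerivAt_phaseZero_defect hu'.1 (hp.1 u hu').1 (hpu u hu') (hp.1 u hu').2
  have hη : ∀ u ∈ Set.Ioo c u₀, 0 ≤ 1 - f u / u := fun u hu => by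
    have := hf1 u ⟨hc.trans hu.1, hu.2.trans hu₀⟩
    rw [sub_nonneg, div_le_one (hc.trans hu.1)]
    exact this
  constructor
  · refine ge_of_hasDerivAt_nonpos hcu.le hcont hd fun u hu => ?_
    have := hc.trans hu.1
    have := hη u hu
    rw [neg_nonpos]
    positivity
  · have key := le_of_hasDerivAt_nonneg hcu.le
      (hcont.sub (ContinuousOn.const_smul (c := (64 : ℝ))
        (fun u hu => (hd0 u hu).continuousAt.continuousWithinAt)))
      (fun u hu => (hd u hu).sub ((hd0 u (Set.Ioo_subset_Icc_self hu)).const_mul 64)) (fun u hu => ?_)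
    · simp only [Pi.sub_apply, Pi.smul_apply, smul_eq_mul] at key
      linarith
    · have hu0 : 0 < u := hc.trans hu.1
      have hlow := slope_sq_add_lower hc hu₀ hω hωv hf1 hP hq hs₀ u hu
      have hup := hm u ⟨hu0, hu.2⟩
      have hl : log u < 0 := log_neg hu0 (hu.2.trans hu₀)
      have hl2 : 0 < log u ^ 2 := sq_pos_of_neg hl
      have hs : p u / u - 1 ≠ 0 := by
        have : p u / u < 1 := by
          rw [div_lt_one hu0]; exact hpu u ⟨hu0, hu.2.trans hu₀⟩
        linarith
      have hs2 : 0 < (p u / u - 1) ^ 2 := by positivity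
      have hS : (p u / u - 1) ^ 2 ≤ 64 * ((P u / u - v / 2) ^ 2 + ω ^ 2) := by
        have h1 : (p u / u - 1) ^ 2 ≤ 4 / log u ^ 2 := by rwa [le_div_iff₀ hl2]
        have h2 : 4 / log u ^ 2 = 64 * (1 / (16 * log u ^ 2)) := by field_simp; norm_num
        linarith
      have hS0 : 0 < (P u / u - v / 2) ^ 2 + ω ^ 2 := by positivity
      have hη' := hη u hu
      have : (1 - f u / u) / (((P u / u - v / 2) ^ 2 + ω ^ 2) * u) ≤
          64 * ((1 - f u / u) / ((p u / u - 1) ^ 2 * u)) := by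
        rw [mul_div_assoc', div_le_div_iff₀ (by positivity) (by positivity)]
        have := mul_le_mul_of_nonneg_left hS (mul_nonneg hη' hu0.le)
        nlinarith
      linarith

/-! ### Passage to the limit -/

/-- Both ends of the phase have a limit once the singular part `± (v/(2ω)) (π/2)` is removed by
`arctan x + arctan (1/x) = ± π/2`. -/
lemma tendsto_phase_regular {α : Type*} {l : Filter α} {v ω s : α → ℝ} {σ : ℝ}
    (hv : Tendsto v l (𝓝 2)) (hω : Tendsto ω l (𝓝 0)) (hω0 : ∀ᶠ x in l, 0 < ω x)
    (hs : Tendsto s l (𝓝 σ)) (hσ : σ ≠ 0) :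
    Tendsto (fun x => -(v x / (2 * ω x)) * arctan (ω x / s x)
      + 1 / 2 * log (s x ^ 2 + ω x ^ 2)) l (𝓝 (-1 / σ + log σ)) := by
  have hs0 : ∀ᶠ x in l, s x ≠ 0 := hs.eventually_ne hσ
  have hx : Tendsto (fun x => ω x / s x) l (𝓝[≠] 0) := by
    rw [tendsto_nhdsWithin_iff]
    refine ⟨(zero_div σ) ▸ hω.div hs hσ, ?_⟩
    filter_upwards [hω0, hs0] with x h1 h2
    exact div_ne_zero h1.ne' h2
  have hat : Tendsto (fun x : ℝ => arctan x / x) (𝓝[≠] 0) (𝓝 1) := by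
    have h := (hasDerivAt_arctan 0).tendsto_slope
    simp only [slope_fun_def_field, arctan_zero, sub_zero] at h
    simpa using h
  have h1 : Tendsto (fun x => -(v x / 2) / s x * (arctan (ω x / s x) / (ω x / s x)) +
      1 / 2 * log (s x ^ 2 + ω x ^ 2)) l
      (𝓝 (-(2 / 2) / σ * 1 + 1 / 2 * log (σ ^ 2 + 0 ^ 2))) := by
    refine (((hv.div_const 2).neg.div hs hσ).mul (hat.comp hx)).add
      ((Tendsto.log ((hs.pow 2).add (hω.pow 2)) ?_).const_mul _)
    simpa using hσ
  have h2 : -(2 / 2) / σ * 1 + 1 / 2 * log (σ ^ 2 + 0 ^ 2) = -1 / σ + log σ := by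
    norm_num [log_pow]
    ring
  rw [h2] at h1
  refine h1.congr' ?_
  filter_upwards [hω0, hs0] with x h3 h4
  have := h3.ne'
  field_simp

lemma phase_of_neg {v ω s : ℝ} (hω : 0 < ω) (hs : s < 0) :
    phase v ω s = -(v / (2 * ω)) * arctan (ω / s) + 1 / 2 * log (s ^ 2 + ω ^ 2)
      - v / (2 * ω) * (π / 2) := by
  have h := arctan_inv_of_neg (div_neg_of_pos_of_neg hω hs)
  rw [inv_div] at h
  rw [phase, h]
  ring

lemma phase_of_pos {v ω s : ℝ} (hω : 0 < ω) (hs : 0 < s) :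
    phase v ω s = -(v / (2 * ω)) * arctan (ω / s) + 1 / 2 * log (s ^ 2 + ω ^ 2)
      + v / (2 * ω) * (π / 2) := by
  have h := arctan_inv_of_pos (div_pos hω hs)
  rw [inv_div] at h
  rw [phase, h]
  ring

section Limit

variable {f p : ℝ → ℝ} {v : ℝ → ℝ} {P : ℝ → ℝ → ℝ}

lemma tendsto_speed (hf0 : ∀ u ∈ Set.Ioo (0 : ℝ) 1, 0 ≤ f u)
    (hflin : Tendsto (fun u => f u / u) (𝓝[>] 0) (𝓝 1))
    (hv0 : ∀ c ∈ Set.Ioo (0 : ℝ) 1, 0 ≤ v c) (hv2 : ∀ c ∈ Set.Ioo (0 : ℝ) 1, v c < 2)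
    (hP : ∀ c ∈ Set.Ioo (0 : ℝ) 1, IsCutoffOrbit f (v c) c (P c)) :
    Tendsto (fun c => 1 - v c ^ 2 / 4) (𝓝[>] 0) (𝓝 0) ∧ Tendsto v (𝓝[>] 0) (𝓝 2) := by
  have h01 : ∀ᶠ c in 𝓝[>] (0 : ℝ), c ∈ Set.Ioo (0 : ℝ) 1 := Ioo_mem_nhdsGT one_pos
  have h1 : Tendsto (fun c => 1 - v c ^ 2 / 4) (𝓝[>] 0) (𝓝 0) := by
    rw [tendsto_order]
    refine ⟨fun a ha => ?_, fun ε hε => ?_⟩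
    · filter_upwards [h01] with c hc
      have := hv0 c hc
      have := hv2 c hc
      nlinarith
    · have h2 : ∀ᶠ u in 𝓝[>] (0 : ℝ), 1 - f u / u ≤ ε / 2 := by
        filter_upwards [hflin.eventually_const_lt (show 1 - ε / 2 < 1 by linarith)] with u hu
        linarith
      obtain ⟨u₁, hu₁, hη⟩ := mem_nhdsGT_iff_exists_Ioo_subset.1 (h2.and h01)
      have hu₁0 : (0 : ℝ) < u₁ := hu₁
      have hhalf : u₁ / 2 ∈ Set.Ioo 0 u₁ := ⟨by linarith, by linarith⟩
      have hlog := tendsto_log_nhdsGT_zero.eventually_lt_atBot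
        (log (u₁ / 2) - 8 / ε)
      filter_upwards [h01, hlog, Ioo_mem_nhdsGT hhalf.1] with c hc hcl hcu
      by_contra! hgap
      have := log_le_of_speed_gap hε hc.1 hcu.2 (hη hhalf).2.2 hf0
        (fun u hu => (hη ⟨hu.1, hu.2.trans hhalf.2⟩).1) (hv2 c hc) hgap (hP c hc)
      have h3 : 8 / ε < log (u₁ / 2) - log c := by linarith
      rw [div_lt_iff₀ hε] at h3
      linarith
  refine ⟨h1, ?_⟩
  have h2 : Tendsto (fun c => 2 * √(1 - (1 - v c ^ 2 / 4))) (𝓝[>] 0) (𝓝 (2 * √(1 - 0))) :=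
    (h1.const_sub 1).sqrt.const_mul 2
  rw [sub_zero, sqrt_one, mul_one] at h2
  refine h2.congr' ?_
  filter_upwards [h01] with c hc
  rw [sub_sub_cancel]
  have : v c ^ 2 / 4 = (v c / 2) ^ 2 := by ring
  rw [this, sqrt_sq (by linarith [hv0 c hc])]
  ring

/-- The quantisation of the speed: the orbit needs `log (1/c) = (v/2) π/ω + const + o(1)` to turn
from the minimal-speed orbit to the ray `p = v u`. -/
lemma tendsto_log_add_phase {Φ₀ : ℝ} (hf0 : ∀ u ∈ Set.Ioo (0 : ℝ) 1, 0 ≤ f u)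
    (hf1 : ∀ u ∈ Set.Ioo (0 : ℝ) 1, f u ≤ u)
    (hflin : Tendsto (fun u => f u / u) (𝓝[>] 0) (𝓝 1))
    (hp : IsOrbit f 2 0 p) (hpu : ∀ u ∈ Set.Ioo (0 : ℝ) 1, p u < u)
    (hΦ : Tendsto (fun u => -log u - phaseZero (p u / u - 1)) (𝓝[>] 0) (𝓝 Φ₀))
    (hlog : Tendsto (fun u => log u * (p u / u - 1)) (𝓝[>] 0) (𝓝 1))
    (hv0 : ∀ c ∈ Set.Ioo (0 : ℝ) 1, 0 ≤ v c)
    (hP : ∀ c ∈ Set.Ioo (0 : ℝ) 1, IsCutoffOrbit f (v c) c (P c)) :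
    Tendsto v (𝓝[>] 0) (𝓝 2) ∧ (∀ c ∈ Set.Ioo (0 : ℝ) 1, v c < 2) ∧
    Tendsto (fun c => -log c - v c / (2 * √(1 - v c ^ 2 / 4)) * π) (𝓝[>] 0) (𝓝 (Φ₀ - 1)) := by
  have h01 : ∀ᶠ c in 𝓝[>] (0 : ℝ), c ∈ Set.Ioo (0 : ℝ) 1 := Ioo_mem_nhdsGT one_pos
  have hv2 : ∀ c ∈ Set.Ioo (0 : ℝ) 1, v c < 2 := fun c hc =>
    speed_lt_two hc hp hpu (hP c hc).1 (hP c hc).2.1 (hP c hc).2.2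
  obtain ⟨hgap, hv⟩ := tendsto_speed hf0 hflin hv0 hv2 hP
  refine ⟨hv, hv2, ?_⟩
  set ω : ℝ → ℝ := fun c => √(1 - v c ^ 2 / 4) with hωdef
  have hωlim : Tendsto ω (𝓝[>] 0) (𝓝 0) := by simpa using hgap.sqrt
  have hgap0 : ∀ c ∈ Set.Ioo (0 : ℝ) 1, 0 < 1 - v c ^ 2 / 4 := fun c hc => by
    have := hv0 c hc
    have := hv2 c hc
    nlinarith
  have hω0 : ∀ᶠ c in 𝓝[>] (0 : ℝ), 0 < ω c := by
    filter_upwards [h01] with c hc using sqrt_pos.2 (hgap0 c hc)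
  -- the phase at the cut-off, where the slope equals `v/2`
  have hend := tendsto_phase_regular hv hωlim hω0 (hv.div_const 2) (by norm_num)
  norm_num at hend
  have hslope : Tendsto (fun u => p u / u) (𝓝[>] 0) (𝓝 1) := by
    have h1 := hlog.mul tendsto_log_nhdsGT_zero.inv_tendsto_atBot
    have h2 := h1.const_add 1
    norm_num at h2
    refine h2.congr' ?_
    filter_upwards [h01] with u hu
    have := (log_neg hu.1 hu.2).ne
    field_simp
    ring
  rw [Metric.tendsto_nhds]
  intro ε hε
  have hgood : ∀ᶠ u in 𝓝[>] (0 : ℝ), u ∈ Set.Ioo (0 : ℝ) 1 ∧ 1 / 2 < p u / u ∧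
      1 / 2 < log u * (p u / u - 1) ∧ log u * (p u / u - 1) < 2 ∧
      |(-log u - phaseZero (p u / u - 1)) - Φ₀| < ε / 200 := by
    filter_upwards [h01, hslope.eventually_const_lt (show (1 / 2 : ℝ) < 1 by norm_num),
      hlog.eventually_const_lt (show (1 / 2 : ℝ) < 1 by norm_num),
      hlog.eventually_lt_const (show (1 : ℝ) < 2 by norm_num),
      Metric.tendsto_nhds.1 hΦ (ε / 200) (by positivity)] with u h1 h2 h3 h4 h5
    exact ⟨h1, h2, h3, h4, h5⟩
  obtain ⟨d, hd, hgood⟩ := mem_nhdsGT_iff_exists_Ioo_subset.1 hgood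
  have hd0 : (0 : ℝ) < d := hd
  obtain ⟨u₀, hu₀⟩ : ∃ u₀, u₀ ∈ Set.Ioo 0 d := ⟨d / 2, by linarith, by linarith⟩
  obtain ⟨hu₀1, -, hs₀, -, hΦ₀⟩ := hgood hu₀
  have hl₀ : log u₀ < 0 := log_neg hu₀1.1 hu₀1.2
  have hσ : p u₀ / u₀ - 1 < 1 / (4 * log u₀) := by
    have h1 : log u₀ * (1 / (4 * log u₀)) = 1 / 4 := by
      have := hl₀.ne
      field_simp
    nlinarith
  have hσ0 : p u₀ / u₀ - 1 < 0 := by nlinarith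
  -- the orbits converge at the fixed height `u₀`
  have hPu₀ : Tendsto (fun c => P c u₀) (𝓝[>] 0) (𝓝 (p u₀)) := by
    have h1 : Tendsto (fun c => √(p u₀ ^ 2 + (2 - v c))) (𝓝[>] 0) (𝓝 (p u₀)) := by
      have := ((hv.const_sub 2).const_add (p u₀ ^ 2)).sqrt
      rwa [sub_self, add_zero, sqrt_sq (hp.1 u₀ hu₀1).1.le] at this
    refine tendsto_of_tendsto_of_tendsto_of_le_of_le' tendsto_const_nhds h1 ?_ ?_
    · filter_upwards [Ioo_mem_nhdsGT hu₀.1, h01] with c hc hc1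
      exact orbit_le hc.1.le (hv2 c hc1) hp (hP c hc1).1 u₀ ⟨hc.2, hu₀1.2⟩
    · filter_upwards [Ioo_mem_nhdsGT hu₀.1, h01] with c hc hc1
      exact le_sqrt_of_sq_le
        (orbit_sq_le hc.1.le (hv2 c hc1) (hv0 c hc1) hp hpu (hP c hc1).1 u₀ ⟨hc.2, hu₀1.2⟩)
  have hs : Tendsto (fun c => P c u₀ / u₀ - v c / 2) (𝓝[>] 0) (𝓝 (p u₀ / u₀ - 1)) := by
    simpa using (hPu₀.div_const u₀).sub (hv.div_const 2)
  have hstart := tendsto_phase_regular hv hωlim hω0 hs hσ0.ne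
  filter_upwards [h01, hω0, Ioo_mem_nhdsGT hu₀.1, hs.eventually_lt_const hσ,
    hs.eventually_lt_const hσ0, Metric.tendsto_nhds.1 hend (ε / 10) (by positivity),
    Metric.tendsto_nhds.1 hstart (ε / 10) (by positivity)] with c hc hωc hcu hsc hsc0 he hst
  have hωv : ω c ^ 2 = 1 - v c ^ 2 / 4 := sq_sqrt (hgap0 c hc).le
  obtain ⟨hlow, hupp⟩ := phase_defect_bounds hc.1 hcu.2 hu₀1.2 hωc hωv hf1 hp hpu (hP c hc)
    (fun u hu => by
      have hu' : u ∈ Set.Ioo 0 d := ⟨hc.1.trans hu.1, hu.2.trans_lt hu₀.2⟩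
      have h1 := orbit_le hc.1.le (hv2 c hc) hp (hP c hc).1 u ⟨hu.1, hu.2.trans_lt hu₀1.2⟩
      have h2 := (hgood hu').2.1
      have h3 : p u / u ≤ P c u / u := div_le_div_of_nonneg_right h1 hu'.1.le
      linarith) hsc.le
    (fun u hu => by
      obtain ⟨-, -, h1, h2, -⟩ := hgood ⟨hu.1, hu.2.trans hu₀.2⟩
      have : (p u / u - 1) ^ 2 * log u ^ 2 = (log u * (p u / u - 1)) ^ 2 := by ring
      rw [this]
      nlinarith)
  have hΦc := (hgood ⟨hc.1, hcu.2.trans hu₀.2⟩).2.2.2.2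
  have hvc : 0 < v c / 2 := by
    have h1 := orbit_le hc.1.le (hv2 c hc) hp (hP c hc).1 u₀ ⟨hcu.2, hu₀1.2⟩
    have h2 := orbit_le_speed_mul hc hf0 (hP c hc).1 (hP c hc).2.1 (hP c hc).2.2 u₀
      ⟨hcu.2.le, hu₀1.2⟩
    have h3 := (hp.1 u₀ hu₀1).1
    have : 0 < v c := by
      by_contra! h
      nlinarith [hu₀.1]
    linarith
  have hslope_c : P c c / c - v c / 2 = v c / 2 := by
    rw [(hP c hc).2.2, mul_div_cancel_right₀ _ hc.1.ne']
    ring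
  rw [hslope_c, phase_of_pos hωc hvc, phase_of_neg hωc hsc0] at hlow hupp
  have hpz : phaseZero (p u₀ / u₀ - 1) = -1 / (p u₀ / u₀ - 1) + log (p u₀ / u₀ - 1) := by
    rw [phaseZero, log_neg_eq_log]
  rw [Real.dist_eq] at he hst ⊢
  rw [← hpz] at hst
  generalize phaseZero (p u₀ / u₀ - 1) = a at *
  generalize phaseZero (p c / c - 1) = b at *
  have hlin : v c / (2 * √(1 - v c ^ 2 / 4)) * π
    = v c / (2 * ω c) * (π / 2) + v c / (2 * ω c) * (π / 2) := by
    simp only [hωdef]; ring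
  rw [hlin]
  norm_num at he hst hlow hupp
  rw [abs_lt] at *
  constructor <;> linarith [he.1, he.2, hst.1, hst.2, hΦ₀.1, hΦ₀.2, hΦc.1, hΦc.2]

end Limit

/-- Inverting `log (1/c) = (v/2) π / √(1 - v²/4) - K + o(1)` for the speed. -/
lemma tendsto_cube_of_tendsto_phase {α : Type*} {l : Filter α} {v L : α → ℝ} {K : ℝ}
    (hv : Tendsto v l (𝓝 2)) (hv0 : ∀ᶠ x in l, 0 ≤ v x) (hv2 : ∀ᶠ x in l, v x < 2)
    (hL : Tendsto L l atTop)
    (h : Tendsto (fun x => L x - v x / (2 * √(1 - v x ^ 2 / 4)) * π) l (𝓝 (-K))) :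
    Tendsto (fun x => (-L x) ^ 3 * (v x - 2 + π ^ 2 / (-L x) ^ 2)) l (𝓝 (-2 * π ^ 2 * K)) := by
  set R : α → ℝ := fun x => v x / (2 * √(1 - v x ^ 2 / 4)) * π with hR
  have hRtop : Tendsto R l atTop := by
    have : Tendsto (fun x => L x + -(L x - R x)) l atTop := hL.atTop_add h.neg
    exact this.congr fun x => by ring
  have hLR : Tendsto (fun x => L x / R x) l (𝓝 1) := by
    have h1 := (h.div_atTop hRtop).const_add 1
    rw [add_zero] at h1
    refine h1.congr' ?_
    filter_upwards [hRtop.eventually_gt_atTop 0] with x hx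
    change 1 + (L x - R x) / R x = L x / R x
    field_simp
    ring
  have hRinv : Tendsto (fun x => (R x)⁻¹) l (𝓝 0) := hRtop.inv_tendsto_atTop
  have hmain : Tendsto (fun x => π ^ 2 * ((L x - R x) * (L x / R x) * (1 + L x / R x)
      - (L x / R x) ^ 3 * (R x)⁻¹ * π ^ 2 * (v x ^ 2 * (v x + 1) / (v x + 2) ^ 2))) l
      (𝓝 (π ^ 2 * (-K * 1 * (1 + 1) - 1 ^ 3 * 0 * π ^ 2 * (2 ^ 2 * (2 + 1) / (2 + 2) ^ 2)))) := by
    refine Tendsto.const_mul _ (((h.mul hLR).mul (hLR.const_add 1)).sub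
      ((((hLR.pow 3).mul hRinv).mul_const _).mul ?_))
    exact ((hv.pow 2).mul (hv.add_const 1)).div ((hv.add_const 2).pow 2) (by norm_num)
  have hlim : π ^ 2 * (-K * 1 * (1 + 1) - 1 ^ 3 * 0 * π ^ 2 * (2 ^ 2 * (2 + 1) / (2 + 2) ^ 2))
      = -2 * π ^ 2 * K := by ring
  rw [hlim] at hmain
  refine hmain.congr' ?_
  filter_upwards [hv0, hv2, hL.eventually_gt_atTop 0, hRtop.eventually_gt_atTop 0]
    with x h0 h2 hLx hRx
  have hg : 0 < 1 - v x ^ 2 / 4 := by nlinarith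
  have hR2 : R x ^ 2 * ((2 - v x) * (2 + v x)) = π ^ 2 * v x ^ 2 := by
    simp only [hR]
    rw [mul_pow, div_pow, mul_pow, sq_sqrt hg.le]
    have : (2 - v x) * (2 + v x) = 4 * (1 - v x ^ 2 / 4) := by ring
    rw [this]
    generalize 1 - v x ^ 2 / 4 = g at *
    field_simp
    ring
  generalize R x = r at *
  generalize L x = y at *
  generalize v x = w at *
  have hw : 0 < w + 2 := by linarith
  have hδ : 2 - w = π ^ 2 * w ^ 2 / ((2 + w) * r ^ 2) := by
    rw [eq_div_iff (by positivity)]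
    linarith
  have hpi := pi_pos
  have e3 : (-y) ^ 3 * (w - 2 + π ^ 2 / (-y) ^ 2) = y ^ 3 * (2 - w) - π ^ 2 * y := by
    field_simp
    ring
  rw [e3]
  have e1 : π ^ 2 * ((y - r) * (y / r) * (1 + y / r)
      - (y / r) ^ 3 * r⁻¹ * π ^ 2 * (w ^ 2 * (w + 1) / (w + 2) ^ 2))
      = π ^ 2 * y ^ 3 / r ^ 2 * (1 - π ^ 2 * w ^ 2 / ((2 + w) * r ^ 2) * (w + 1) / (w + 2))
        - π ^ 2 * y := by
    field_simp
    ring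
  have e2 : y ^ 3 * (π ^ 2 * w ^ 2 / ((2 + w) * r ^ 2))
      = π ^ 2 * y ^ 3 / r ^ 2 * (w ^ 2 / (2 + w)) := by
    field_simp
  have e4 : 1 - (2 - w) * (w + 1) / (w + 2) = w ^ 2 / (2 + w) := by
    field_simp
    ring
  rw [e1, ← hδ, e4, ← e2, ← hδ]

/-! ### From travelling waves to phase-plane orbits -/

section Wave

variable {U dU F : ℝ → ℝ} {v b₀ : ℝ}

lemma exp_mul_deriv_antitone (h : ∀ y < b₀, HasDerivAt dU (-v * dU y - F y) y)
    (hF : ∀ y < b₀, 0 ≤ F y) {a b : ℝ} (hab : a ≤ b) (hb : b < b₀) :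
    exp (v * b) * dU b ≤ exp (v * a) * dU a := by
  have hd : ∀ y < b₀, HasDerivAt (fun y => exp (v * y) * dU y) (-(exp (v * y) * F y)) y := by
    intro y hy
    have h1 : HasDerivAt (fun y => exp (v * y)) (exp (v * y) * v) y := by
      simpa using ((hasDerivAt_id y).const_mul v).exp
    exact (h1.mul (h y hy)).congr_deriv (by ring)
  refine ge_of_hasDerivAt_nonpos (F := fun y => exp (v * y) * dU y) hab
    (fun y hy => (hd y (hy.2.trans_lt hb)).continuousAt.continuousWithinAt)
    (fun y hy => hd y (hy.2.trans hb)) (fun y hy => ?_)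
  have := mul_nonneg (exp_pos (v * y)).le (hF y (hy.2.trans hb))
  linarith

/-- A wave that is somewhere nondecreasing was nondecreasing before, hence is at least its limit
`1` at `-∞`. -/
lemma one_le_of_deriv_nonneg (hd : ∀ y < b₀, HasDerivAt U (dU y) y)
    (h : ∀ y < b₀, HasDerivAt dU (-v * dU y - F y) y) (hF : ∀ y < b₀, 0 ≤ F y)
    (hbot : Tendsto U atBot (𝓝 1)) {b : ℝ} (hb : b < b₀) (hdb : 0 ≤ dU b) :
    ∀ y ≤ b, 1 ≤ U y := by
  intro y hy
  have hpos : ∀ x ≤ b, 0 ≤ dU x := fun x hx => by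
    have h1 := exp_mul_deriv_antitone h hF hx hb
    have h2 : 0 ≤ exp (v * x) * dU x := le_trans (by positivity) h1
    exact nonneg_of_mul_nonneg_right h2 (exp_pos _)
  refine le_of_tendsto hbot ?_
  filter_upwards [eventually_le_atBot y] with x hx
  exact le_of_hasDerivAt_nonneg hx
    (fun z hz => (hd z ((hz.2.trans hy).trans_lt hb)).continuousAt.continuousWithinAt)
    (fun z hz => hd z ((hz.2.le.trans hy).trans_lt hb)) (fun z hz => hpos z (hz.2.le.trans hy))

lemma tendsto_deriv_atBot (hv : 0 ≤ v) (hd : ∀ y < b₀, HasDerivAt U (dU y) y)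
    (h : ∀ y < b₀, HasDerivAt dU (-v * dU y - F y) y) (hF : ∀ y < b₀, 0 ≤ F y)
    (hneg : ∀ y < b₀, dU y ≤ 0) (hbot : Tendsto U atBot (𝓝 1)) :
    Tendsto dU atBot (𝓝 0) := by
  have hlow : Tendsto (fun y => exp v * (U (y + 1) - U y)) atBot (𝓝 0) := by
    have h1 : Tendsto (fun y => U (y + 1)) atBot (𝓝 1) :=
      hbot.comp (tendsto_atBot_add_const_right _ _ tendsto_id)
    simpa using (h1.sub hbot).const_mul (exp v)
  refine tendsto_of_tendsto_of_tendsto_of_le_of_le' hlow tendsto_const_nhds ?_ ?_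
  · filter_upwards [eventually_lt_atBot (b₀ - 1)] with y hy
    obtain ⟨ξ, hξ, hmvt⟩ := exists_hasDerivAt_eq_slope U dU (show y < y + 1 by linarith)
      (fun z hz => (hd z (by linarith [hz.2])).continuousAt.continuousWithinAt)
      (fun z hz => hd z (by linarith [hz.2]))
    have h1 : U (y + 1) - U y = dU ξ := by rw [hmvt]; simp
    rw [h1]
    have h2 := exp_mul_deriv_antitone h hF hξ.1.le (by linarith [hξ.2])
    have h3 : exp (v * ξ) ≤ exp v * exp (v * y) := by
      rw [← exp_add]
      exact exp_le_exp.2 (by nlinarith [hξ.2])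
    have h4 := hneg ξ (by linarith [hξ.2])
    have h5 : exp (v * y) * (exp v * dU ξ) ≤ exp (v * y) * dU y := by
      nlinarith
    exact le_of_mul_le_mul_left h5 (exp_pos _)
  · filter_upwards [eventually_lt_atBot b₀] with y hy using hneg y hy

end Wave

lemma exists_inverse {U : ℝ → ℝ} (hc : Continuous U) (ha : StrictAnti U)
    (hbot : Tendsto U atBot (𝓝 1)) (htop : Tendsto U atTop (𝓝 0)) :
    (∀ y, U y ∈ Set.Ioo (0 : ℝ) 1) ∧ ∃ g : ℝ → ℝ, (∀ u ∈ Set.Ioo (0 : ℝ) 1, U (g u) = u) ∧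
      (∀ u ∈ Set.Ioo (0 : ℝ) 1, ContinuousAt g u) ∧ Tendsto g (𝓝[>] 0) atTop ∧
      Tendsto g (𝓝[<] 1) atBot := by
  have hr : ∀ y, U y ∈ Set.Ioo (0 : ℝ) 1 := by
    intro y
    constructor
    · have h1 : (0 : ℝ) ≤ U (y + 1) := ha.antitone.le_of_tendsto htop _
      have h2 : U (y + 1) < U y := ha (by linarith)
      linarith
    · have h1 : U (y - 1) ≤ 1 := ha.antitone.ge_of_tendsto hbot _
      have h2 : U y < U (y - 1) := ha (by linarith)
      linarith
  have hsurj : ∀ u, u ∈ Set.Ioo (0 : ℝ) 1 → ∃ y, U y = u := by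
    intro u hu
    obtain ⟨a, ha'⟩ := (htop.eventually_lt_const hu.1).exists
    obtain ⟨b, hb'⟩ := (hbot.eventually_const_lt hu.2).exists
    exact mem_range_of_exists_le_of_exists_ge hc ⟨a, ha'.le⟩ ⟨b, hb'.le⟩
  choose! g hg using hsurj
  have hlt : ∀ u ∈ Set.Ioo (0 : ℝ) 1, ∀ a, U a < u → g u < a := fun u hu a h => by
    rw [← hg u hu] at h
    exact ha.lt_iff_gt.1 h
  have hgt : ∀ u ∈ Set.Ioo (0 : ℝ) 1, ∀ a, u < U a → a < g u := fun u hu a h => by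
    rw [← hg u hu] at h
    exact ha.lt_iff_gt.1 h
  refine ⟨hr, g, hg, fun u hu => ?_, ?_, ?_⟩
  · refine tendsto_order.2 ⟨fun a h => ?_, fun a h => ?_⟩
    · have h1 : u < U a := by
        rw [← hg u hu]; exact ha h
      filter_upwards [Ioo_mem_nhds hu.1 hu.2, eventually_lt_nhds h1] with w hw hw1
      exact hgt w hw a hw1
    · have h1 : U a < u := by
        rw [← hg u hu]; exact ha h
      filter_upwards [Ioo_mem_nhds hu.1 hu.2, eventually_gt_nhds h1] with w hw hw1
      exact hlt w hw a hw1
  · rw [tendsto_atTop]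
    intro a
    filter_upwards [Ioo_mem_nhdsGT (hr a).1] with w hw
    exact (hgt w ⟨hw.1, hw.2.trans (hr a).2⟩ a hw.2).le
  · rw [tendsto_atBot]
    intro a
    filter_upwards [Ioo_mem_nhdsLT (hr a).2] with w hw
    exact (hlt w ⟨(hr a).1.trans hw.1, hw.2⟩ a hw.1).le

/-- A decreasing front, written with its height `u` as independent variable, is an orbit. -/
lemma exists_orbit {f U dU : ℝ → ℝ} {v c : ℝ} (hd : ∀ y, HasDerivAt U (dU y) y)
    (hneg : ∀ y, dU y < 0) (hcont : Continuous dU) (hbot : Tendsto U atBot (𝓝 1))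
    (htop : Tendsto U atTop (𝓝 0)) (hc : 0 ≤ c)
    (hode : ∀ y, c < U y → HasDerivAt dU (-v * dU y - f (U y)) y)
    (hdU : Tendsto dU atBot (𝓝 0)) :
    StrictAnti U ∧ ∃ g : ℝ → ℝ, (∀ u ∈ Set.Ioo (0 : ℝ) 1, U (g u) = u) ∧
      Tendsto g (𝓝[>] 0) atTop ∧ ContinuousOn (fun u => -dU (g u)) (Set.Ioo 0 1) ∧
      IsOrbit f v c (fun u => -dU (g u)) := by
  have hanti : StrictAnti U := strictAnti_of_deriv_neg fun y => by
    rw [(hd y).deriv]; exact hneg y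
  have hUc : Continuous U := continuous_iff_continuousAt.2 fun y => (hd y).continuousAt
  obtain ⟨-, g, hg, hgc, hg0, hg1⟩ := exists_inverse hUc hanti hbot htop
  refine ⟨hanti, g, hg, hg0, fun u hu => ?_, fun u hu => ⟨?_, ?_⟩, ?_⟩
  · exact (ContinuousAt.comp (f := g) hcont.continuousAt (hgc u hu)).neg.continuousWithinAt
  · linarith [hneg (g u)]
  · have hu' : u ∈ Set.Ioo (0 : ℝ) 1 := ⟨hc.trans_lt hu.1, hu.2⟩
    have h1 : HasDerivAt g (dU (g u))⁻¹ u :=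
      HasDerivAt.of_local_left_inverse (hgc u hu') (hd (g u)) (hneg (g u)).ne
        (by filter_upwards [Ioo_mem_nhds hu'.1 hu'.2] with w hw using hg w hw)
    have h2 := hode (g u) (by rw [hg u hu']; exact hu.1)
    refine (h2.comp u h1).neg.congr_deriv ?_
    rw [hg u hu']
    have := (hneg (g u)).ne
    field_simp
    ring
  · simpa using (hdU.comp hg1).neg

lemma kpp_le_mul_one_sub {f : ℝ → ℝ} (hf : ContDiff ℝ 1 f) (h1 : f 1 = 0) :
    ∃ K, 0 ≤ K ∧ ∀ u ∈ Set.Icc (0 : ℝ) 1, f u ≤ K * (1 - u) := by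
  have hcont : Continuous (deriv f) := hf.continuous_deriv le_rfl
  obtain ⟨K, hK⟩ := isCompact_Icc.exists_bound_of_continuousOn
    (hcont.continuousOn (s := Set.Icc (0 : ℝ) 1))
  refine ⟨K, (norm_nonneg _).trans (hK 0 (by simp)), fun u hu => ?_⟩
  have := Convex.norm_image_sub_le_of_norm_deriv_le (f := f) (s := Set.Icc (0 : ℝ) 1)
    (fun x _ => (hf.differentiable one_ne_zero) x) hK (convex_Icc 0 1)
    (Set.right_mem_Icc.2 zero_le_one) hu
  rw [h1, sub_zero, norm_eq_abs, norm_eq_abs, abs_sub_comm, abs_of_nonneg (sub_nonneg.2 hu.2)]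
    at this
  exact (le_abs_self _).trans this

/-- Ahead of the cut-off the wave is the exponential `c e^{-v y}`. -/
lemma wave_ahead {U dU : ℝ → ℝ} {v c : ℝ} (hc : 0 < c) (hv : 0 ≤ v)
    (hd : ∀ y, HasDerivAt U (dU y) y) (hcont : Continuous dU)
    (hode : ∀ y, 0 < y → HasDerivAt dU (-v * dU y) y) (hU0 : U 0 = c)
    (htop : Tendsto U atTop (𝓝 0)) : 0 < v ∧ ∀ y, 0 ≤ y → 0 < U y ∧ dU y = -v * U y := by
  have hUc : Continuous U := continuous_iff_continuousAt.2 fun y => (hd y).continuousAt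
  -- `U' + v U` is conserved
  have hcons : ∀ y, 0 ≤ y → dU y + v * U y = dU 0 + v * U 0 := fun y hy => by
    have hD : ∀ z ∈ Set.Ioo 0 y, HasDerivAt (fun z => dU z + v * U z) 0 z := fun z hz =>
      ((hode z hz.1).add ((hd z).const_mul v)).congr_deriv (by ring)
    have hC : ContinuousOn (fun z => dU z + v * U z) (Set.Icc 0 y) := by fun_prop
    exact le_antisymm (ge_of_hasDerivAt_nonpos hy hC hD fun _ _ => le_rfl)
      (le_of_hasDerivAt_nonneg hy hC hD fun _ _ => le_rfl)
  set C := dU 0 + v * U 0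
  have hC0 : C = 0 := by
    have hmvt : ∀ y : ℝ, ∃ ξ, y < ξ ∧ U (y + 1) - U y = dU ξ := fun y => by
      obtain ⟨ξ, hξ, hm⟩ := exists_hasDerivAt_eq_slope U dU (show y < y + 1 by linarith)
        hUc.continuousOn (fun z _ => hd z)
      exact ⟨ξ, hξ.1, by rw [hm]; simp⟩
    choose ξ hξ hm using hmvt
    have hξt : Tendsto ξ atTop atTop := tendsto_atTop_mono (fun y => (hξ y).le) tendsto_id
    have h1 : Tendsto (fun y => U (y + 1) - U y + v * U (ξ y)) atTop (𝓝 0) := by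
      have h2 : Tendsto (fun y => U (y + 1)) atTop (𝓝 0) :=
        htop.comp (tendsto_atTop_add_const_right _ _ tendsto_id)
      simpa using (h2.sub htop).add ((htop.comp hξt).const_mul v)
    have h3 : Tendsto (fun y => U (y + 1) - U y + v * U (ξ y)) atTop (𝓝 C) := by
      refine tendsto_const_nhds.congr' ?_
      filter_upwards [eventually_ge_atTop 0] with y hy
      rw [hm, hcons (ξ y) (hy.trans (hξ y).le)]
    exact tendsto_nhds_unique h3 h1
  have hdU : ∀ y, 0 ≤ y → dU y = -v * U y := fun y hy => by
    have := hcons y hy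
    linarith
  have hexp : ∀ y, 0 ≤ y → exp (v * y) * U y = c := fun y hy => by
    have hD : ∀ z ∈ Set.Ioo 0 y, HasDerivAt (fun z => exp (v * z) * U z) 0 z := fun z hz => by
      have h1 : HasDerivAt (fun y => exp (v * y)) (exp (v * z) * v) z := by
        simpa using ((hasDerivAt_id z).const_mul v).exp
      refine (h1.mul (hd z)).congr_deriv ?_
      rw [hdU z hz.1.le]
      ring
    have hC : ContinuousOn (fun z => exp (v * z) * U z) (Set.Icc 0 y) := by fun_prop
    have h1 := ge_of_hasDerivAt_nonpos hy hC hD fun _ _ => le_rfl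
    have h2 := le_of_hasDerivAt_nonneg hy hC hD fun _ _ => le_rfl
    simp only [mul_zero, exp_zero, one_mul, hU0] at h1 h2
    exact le_antisymm h1 h2
  refine ⟨hv.lt_of_ne' fun h => ?_, fun y hy => ⟨?_, hdU y hy⟩⟩
  · have h1 : Tendsto U atTop (𝓝 c) := by
      refine tendsto_const_nhds.congr' ?_
      filter_upwards [eventually_ge_atTop 0] with y hy
      have := hexp y hy
      simpa [h] using this.symm
    exact hc.ne (tendsto_nhds_unique htop h1)
  · have h1 := hexp y hy
    have h2 := exp_pos (v * y)
    by_contra! h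
    nlinarith

/-- Behind the cut-off the wave is strictly decreasing. Otherwise it equals `1` up to some point,
and `z = 1 - U`, which satisfies `z'' + v z' ≤ K z`, stays `0` by a Grönwall argument. -/
lemma wave_behind {U dU F : ℝ → ℝ} {v c K : ℝ} (hc : c < 1) (hv : 0 ≤ v) (hK : 0 ≤ K)
    (hd : ∀ y, HasDerivAt U (dU y) y) (hcont : Continuous dU)
    (hode : ∀ y < 0, HasDerivAt dU (-v * dU y - F y) y) (hF : ∀ y < 0, 0 ≤ F y)
    (hFK : ∀ y < 0, F y ≤ K * (1 - U y)) (hU1 : ∀ y < 0, U y ≤ 1) (hU0 : U 0 = c)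
    (hbot : Tendsto U atBot (𝓝 1)) : ∀ y < 0, dU y < 0 := by
  intro y₁ hy₁
  by_contra! hpos
  have hUc : Continuous U := continuous_iff_continuousAt.2 fun y => (hd y).continuousAt
  have hge := one_le_of_deriv_nonneg (fun y _ => hd y) hode hF hbot hy₁ hpos
  have hone : U y₁ = 1 := le_antisymm (hU1 y₁ hy₁) (hge y₁ le_rfl)
  have hd0 : dU y₁ = 0 := by
    have hmax : IsLocalMax U y₁ := by
      filter_upwards [eventually_lt_nhds hy₁] with y hy
      rw [hone]
      exact hU1 y hy
    rw [← (hd y₁).deriv]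
    exact hmax.deriv_eq_zero
  -- any `κ` with `κ (v + κ) ≥ K` will do
  set κ := K + 1
  have hκ : K ≤ κ * (v + κ) := by
    simp only [κ]
    nlinarith [mul_nonneg hK hv]
  have hexp : ∀ a z : ℝ, HasDerivAt (fun y => exp (a * y)) (exp (a * z) * a) z := fun a z => by
    simpa using ((hasDerivAt_id z).const_mul a).exp
  have hle : ∀ y ∈ Set.Icc y₁ 0, -dU y - κ * (1 - U y) ≤ 0 := by
    intro y hy
    have h1 : exp ((v + κ) * y) * (-dU y - κ * (1 - U y)) ≤
        exp ((v + κ) * y₁) * (-dU y₁ - κ * (1 - U y₁)) := by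
      refine ge_of_hasDerivAt_nonpos
        (F := fun y => exp ((v + κ) * y) * (-dU y - κ * (1 - U y)))
        (F' := fun y => exp ((v + κ) * y) * (F y - κ * (v + κ) * (1 - U y)))
        hy.1 (by fun_prop) (fun z hz => ?_) (fun z hz => ?_)
      · refine ((hexp (v + κ) z).mul ((hode z (hz.2.trans_le hy.2)).neg.sub
          (((hd z).const_sub 1).const_mul κ))).congr_deriv ?_
        simp only [Pi.sub_apply, Pi.neg_apply]
        ring
      · have hz0 := hz.2.trans_le hy.2
        have h2 := hFK z hz0
        have h3 := hU1 z hz0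
        refine mul_nonpos_of_nonneg_of_nonpos (exp_pos _).le ?_
        nlinarith
    rw [hd0, hone] at h1
    norm_num at h1
    by_contra! h
    have := mul_pos (exp_pos ((v + κ) * y)) h
    linarith
  have h2 : exp (-κ * 0) * (1 - U 0) ≤ exp (-κ * y₁) * (1 - U y₁) := by
    refine ge_of_hasDerivAt_nonpos (F := fun y => exp (-κ * y) * (1 - U y))
      (F' := fun y => exp (-κ * y) * (-dU y - κ * (1 - U y))) hy₁.le (by fun_prop)
      (fun z _ => ((hexp (-κ) z).mul ((hd z).const_sub 1)).congr_deriv (by ring))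
      (fun z hz => mul_nonpos_of_nonneg_of_nonpos (exp_pos _).le (hle z ⟨hz.1.le, hz.2.le⟩))
  rw [hone, hU0] at h2
  norm_num at h2
  linarith

lemma exists_cutoffOrbit {f U : ℝ → ℝ} {v c : ℝ} (hf : IsKPP f) (hc : c ∈ Set.Ioo (0 : ℝ) 1)
    (hv : 0 ≤ v) (hU : IsPTW f c v U) : ∃ P, IsCutoffOrbit f v c P := by
  obtain ⟨hC1, hC2, hode, hU0, hleft, hright, hbot, htop⟩ := hU
  obtain ⟨hfC, -, hf1, -, -, hfpos, -⟩ := hf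
  have hd : ∀ y, HasDerivAt U (deriv U y) y := fun y =>
    (hC1.differentiable one_ne_zero y).hasDerivAt
  have hcont : Continuous (deriv U) := hC1.continuous_deriv le_rfl
  have hd2 : ∀ y, y ≠ 0 → HasDerivAt (deriv U) (-v * deriv U y - cutoff f c (U y)) y := by
    intro y hy
    have h1 : DifferentiableAt ℝ (deriv U) y := by
      have h2 : ContDiffAt ℝ 1 (deriv U) y := (hC2 y hy).derivWithin (by norm_num)
      exact h2.differentiableAt one_ne_zero
    refine h1.hasDerivAt.congr_deriv ?_
    linarith [hode y hy]
  obtain ⟨hvpos, hahead⟩ := wave_ahead hc.1 hv hd hcont (fun y hy => by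
    have h1 := hd2 y hy.ne'
    have h2 : cutoff f c (U y) = 0 := if_neg (not_lt.2 (hright y hy).2)
    rwa [h2, sub_zero] at h1) hU0 htop
  obtain ⟨K, hK, hKf⟩ := kpp_le_mul_one_sub hfC hf1
  have hF : ∀ y < 0, 0 ≤ cutoff f c (U y) := fun y hy => by
    unfold cutoff
    split_ifs with h
    · rcases (hleft y hy).2.lt_or_eq with h1 | h1
      · exact (hfpos _ (hc.1.trans h) h1).1.le
      · rw [h1, hf1]
    · exact le_rfl
  have hFK : ∀ y < 0, cutoff f c (U y) ≤ K * (1 - U y) := fun y hy => by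
    have h1 := hleft y hy
    unfold cutoff
    split_ifs with h
    · exact hKf _ ⟨hc.1.le.trans h1.1, h1.2⟩
    · exact mul_nonneg hK (sub_nonneg.2 h1.2)
  have hbehind := wave_behind hc.2 hv hK hd hcont (fun y hy => hd2 y hy.ne) hF hFK
    (fun y hy => (hleft y hy).2) hU0 hbot
  have hneg : ∀ y, deriv U y < 0 := fun y => by
    rcases lt_or_ge y 0 with h | h
    · exact hbehind y h
    · obtain ⟨h1, h2⟩ := hahead y h
      rw [h2]
      nlinarith
  obtain ⟨hanti, g, hg, -, hPc, hP⟩ := exists_orbit (f := f) (v := v) hd hneg hcont hbot htop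
    hc.1.le (fun y hy => by
      have hy0 : y < 0 := by
        by_contra! h
        have : U y ≤ U 0 := (strictAnti_of_deriv_neg hneg).antitone h
        linarith
      have h1 := hd2 y hy0.ne
      rwa [cutoff, if_pos hy] at h1)
    (tendsto_deriv_atBot hv (fun y _ => hd y) (fun y hy => hd2 y hy.ne) hF
      (fun y _ => (hneg y).le) hbot)
  refine ⟨_, hP, hPc.mono fun u hu => ⟨hc.1.trans_le hu.1, hu.2⟩, ?_⟩
  have hgc : g c = 0 := hanti.injective (by rw [hg c hc, hU0])
  simp only [hgc, (hahead 0 le_rfl).2, hU0]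
  ring

/-! ### The minimal-speed wave -/

/-- If the derivative of `W` is monotone and `W y - A y → B`, then the line is also approached
to first order: `W' → A`, and even `y (A - W' y) → 0`. -/
lemma tendsto_deriv_of_tendsto_sub {W dW : ℝ → ℝ} {A B : ℝ} (hd : ∀ y, HasDerivAt W (dW y) y)
    (hm : Monotone dW) (hB : Tendsto (fun y => W y - A * y) atTop (𝓝 B)) :
    Tendsto dW atTop (𝓝 A) ∧ Tendsto (fun y => y * (A - dW y)) atTop (𝓝 0) := by
  have hslope : ∀ a b : ℝ, a < b → dW a * (b - a) ≤ W b - W a ∧ W b - W a ≤ dW b * (b - a) := by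
    intro a b hab
    obtain ⟨ξ, hξ, h⟩ := exists_hasDerivAt_eq_slope W dW hab
      (fun z _ => (hd z).continuousAt.continuousWithinAt) (fun z _ => hd z)
    have hpos : 0 < b - a := sub_pos.2 hab
    rw [eq_div_iff hpos.ne'] at h
    rw [← h]
    exact ⟨mul_le_mul_of_nonneg_right (hm hξ.1.le) hpos.le,
      mul_le_mul_of_nonneg_right (hm hξ.2.le) hpos.le⟩
  have hlim : Tendsto dW atTop (𝓝 A) := by
    have hlow : Tendsto (fun y => (W y - A * y) - (W (y + -1) - A * (y + -1)) + A) atTop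
        (𝓝 (B - B + A)) :=
      (hB.sub (hB.comp (tendsto_atTop_add_const_right _ (-1) tendsto_id))).add_const A
    have hup : Tendsto (fun y => (W (y + 1) - A * (y + 1)) - (W y - A * y) + A) atTop
        (𝓝 (B - B + A)) :=
      ((hB.comp (tendsto_atTop_add_const_right _ 1 tendsto_id)).sub hB).add_const A
    rw [sub_self, zero_add] at hlow hup
    refine tendsto_of_tendsto_of_tendsto_of_le_of_le hlow hup (fun y => ?_) (fun y => ?_)
    · have := (hslope (y + -1) y (by linarith)).2
      simp only
      linarith
    · have := (hslope y (y + 1) (by linarith)).1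
      simp only
      linarith
  refine ⟨hlim, ?_⟩
  have hup : Tendsto (fun y => 2 * ((W (y / 2) - A * (y / 2)) - (W y - A * y))) atTop (𝓝 0) := by
    have h := hB.comp (tendsto_id.atTop_div_const (two_pos : (0 : ℝ) < 2))
    simpa using (h.sub hB).const_mul 2
  refine tendsto_of_tendsto_of_tendsto_of_le_of_le' tendsto_const_nhds hup ?_ ?_
  · filter_upwards [eventually_ge_atTop 0] with y hy
    exact mul_nonneg hy (sub_nonneg.2 (hm.ge_of_tendsto hlim y))
  · filter_upwards [eventually_gt_atTop 0] with y hy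
    have := (hslope (y / 2) y (by linarith)).2
    linarith

/-- With `W = e^y U`, the reduced orbit quantities at height `u = U y` are
`log u = log W - y` and `p / u - 1 = -W' / W`; this yields the behaviour of the phase `phaseZero`
along the orbit. -/
lemma tendsto_phaseZero_along {W dW : ℝ → ℝ} {A B : ℝ} (hA : 0 < A)
    (hW : ∀ y, 0 < W y) (hdW : ∀ y, 0 < dW y)
    (hA' : Tendsto (fun y => W y / y) atTop (𝓝 A))
    (hB : Tendsto (fun y => W y - A * y) atTop (𝓝 B)) (hlim : Tendsto dW atTop (𝓝 A))
    (hlim' : Tendsto (fun y => y * (A - dW y)) atTop (𝓝 0)) :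
    Tendsto (fun y => (y - log (W y)) - phaseZero (-(dW y / W y))) atTop
      (𝓝 (-(B / A) - log A)) ∧
    Tendsto (fun y => (log (W y) - y) * -(dW y / W y)) atTop (𝓝 1) := by
  constructor
  · have h1 := ((((hB.add hlim').div hlim hA.ne').neg).sub (hlim.log hA.ne'))
    rw [add_zero] at h1
    refine h1.congr fun y => ?_
    have h2 := (hW y).ne'
    have h3 := (hdW y).ne'
    simp only [phaseZero, Pi.div_apply]
    rw [neg_neg, log_div h3 h2]
    field_simp
    ring
  · have hWt : Tendsto W atTop atTop := by
      have h1 := hA'.pos_mul_atTop hA tendsto_id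
      refine h1.congr' ?_
      filter_upwards [eventually_gt_atTop 0] with y hy
      simp only [id]
      field_simp
    have h1 : Tendsto (fun y => log (W y) / W y) atTop (𝓝 0) :=
      (isLittleO_log_id_atTop.tendsto_div_nhds_zero).comp hWt
    have h2 := (hA'.inv₀ hA.ne').sub h1
    have h3 := hlim.mul h2
    rw [sub_zero, mul_inv_cancel₀ hA.ne'] at h3
    refine h3.congr fun y => ?_
    rw [inv_div]
    ring

/-- The minimal-speed wave gives an orbit below the line `p = u` whose phase is controlled by the
two constants in its tail. -/
lemma exists_minimal_orbit {f Um : ℝ → ℝ} (hf : IsKPP f) (hUm : ContDiff ℝ 2 Um)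
    (hode : ∀ y : ℝ, deriv (deriv Um) y + 2 * deriv Um y + f (Um y) = 0)
    (hrange : ∀ y : ℝ, 0 < Um y ∧ Um y < 1)
    (hbot : Tendsto Um atBot (𝓝 1)) (htop : Tendsto Um atTop (𝓝 0))
    {A B : ℝ} (hA : 0 < A)
    (hAlim : Tendsto (fun y => exp y * Um y / y) atTop (𝓝 A))
    (hBlim : Tendsto (fun y => exp y * Um y - A * y) atTop (𝓝 B)) :
    ∃ p, IsOrbit f 2 0 p ∧ (∀ u ∈ Set.Ioo (0 : ℝ) 1, p u < u) ∧
      Tendsto (fun u => -log u - phaseZero (p u / u - 1)) (𝓝[>] 0) (𝓝 (-(B / A) - log A)) ∧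
      Tendsto (fun u => log u * (p u / u - 1)) (𝓝[>] 0) (𝓝 1) := by
  obtain ⟨-, -, -, -, -, hfpos, -⟩ := hf
  have hd : ∀ y, HasDerivAt Um (deriv Um y) y := fun y =>
    (hUm.differentiable two_ne_zero y).hasDerivAt
  have hcont : Continuous (deriv Um) := hUm.differentiable_deriv_two.continuous
  have hd2 : ∀ y, HasDerivAt (deriv Um) (-2 * deriv Um y - f (Um y)) y := fun y => by
    refine (hUm.differentiable_deriv_two y).hasDerivAt.congr_deriv ?_
    linarith [hode y]
  have hF : ∀ y, 0 ≤ f (Um y) := fun y => (hfpos _ (hrange y).1 (hrange y).2).1.le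
  have hneg : ∀ y, deriv Um y < 0 := fun y => by
    by_contra! h
    have := one_le_of_deriv_nonneg (b₀ := y + 1) (v := 2) (F := fun y => f (Um y))
      (fun z _ => hd z) (fun z _ => hd2 z) (fun z _ => hF z) hbot (lt_add_one y) h y le_rfl
    exact absurd (hrange y).2 (not_lt.2 this)
  obtain ⟨-, g, hg, hg0, -, hp⟩ := exists_orbit (f := f) (v := 2) (c := 0) hd hneg hcont hbot htop
    le_rfl (fun y _ => hd2 y)
    (tendsto_deriv_atBot (b₀ := 0) (v := 2) (F := fun y => f (Um y)) two_pos.le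
      (fun y _ => hd y) (fun y _ => hd2 y) (fun y _ => hF y) (fun y _ => (hneg y).le) hbot)
  set W : ℝ → ℝ := fun y => exp y * Um y with hWdef
  set dW : ℝ → ℝ := fun y => exp y * (Um y + deriv Um y) with hdWdef
  have hWd : ∀ y, HasDerivAt W (dW y) y := fun y =>
    ((hasDerivAt_exp y).mul (hd y)).congr_deriv (by simp only [hdWdef]; ring)
  have hWpos : ∀ y, 0 < W y := fun y => mul_pos (exp_pos y) (hrange y).1
  -- `W'' = e^y (U - f(U)) ≥ 0`
  have hdWd : ∀ y, HasDerivAt dW (exp y * (Um y - f (Um y))) y := fun y =>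
    ((hasDerivAt_exp y).mul ((hd y).add (hd2 y))).congr_deriv (by
      simp only [Pi.add_apply]; ring)
  have hmono : Monotone dW := monotone_of_deriv_nonneg
    (fun y => (hdWd y).differentiableAt) (fun y => by
      rw [(hdWd y).deriv]
      have := (hfpos _ (hrange y).1 (hrange y).2).2
      exact mul_nonneg (exp_pos y).le (by linarith))
  have hWbot : Tendsto W atBot (𝓝 0) := by
    have h1 : Tendsto (fun y => exp y * Um y) atBot (𝓝 (0 * 1)) := tendsto_exp_atBot.mul hbot
    simpa using h1
  -- the convex positive function `W` vanishes at `-∞`, hence increases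
  have hdWpos : ∀ y, 0 < dW y := fun y => by
    by_contra! h
    have h1 : W y ≤ 0 := by
      refine ge_of_tendsto hWbot ?_
      filter_upwards [eventually_le_atBot y] with x hx
      exact ge_of_hasDerivAt_nonpos hx
        (fun z _ => (hWd z).continuousAt.continuousWithinAt) (fun z _ => hWd z)
        (fun z hz => (hmono hz.2.le).trans h)
    exact absurd (hWpos y) (not_lt.2 h1)
  obtain ⟨hlim, hlim'⟩ := tendsto_deriv_of_tendsto_sub hWd hmono hBlim
  obtain ⟨hΦ, hlog⟩ := tendsto_phaseZero_along hA hWpos hdWpos hAlim hBlim hlim hlim'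
  have hslope : ∀ u ∈ Set.Ioo (0 : ℝ) 1,
      -deriv Um (g u) / u - 1 = -(dW (g u) / W (g u)) := fun u hu => by
    simp only [hWdef, hdWdef, hg u hu]
    have h1 := (exp_pos (g u)).ne'
    have h2 := hu.1.ne'
    field_simp
    ring
  have hlogu : ∀ u ∈ Set.Ioo (0 : ℝ) 1, log u = log (W (g u)) - g u := fun u hu => by
    simp only [hWdef, hg u hu]
    rw [log_mul (exp_pos _).ne' hu.1.ne', log_exp]
    ring
  refine ⟨_, hp, fun u hu => ?_, (hΦ.comp hg0).congr' ?_, (hlog.comp hg0).congr' ?_⟩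
  · have h1 := hdWpos (g u)
    simp only [hdWdef, hg u hu] at h1
    have h2 := (pos_iff_pos_of_mul_pos h1).1 (exp_pos _)
    linarith
  · filter_upwards [Ioo_mem_nhdsGT one_pos] with u hu
    rw [hslope u hu, hlogu u hu]
    simp
  · filter_upwards [Ioo_mem_nhdsGT one_pos] with u hu
    rw [hslope u hu, hlogu u hu]
    rfl

/-- Three-term small cut-off asymptotic expansion of the propagation speed. -/
theorem vstar_three_term_expansion (f : ℝ → ℝ) (hf : IsKPP f) (vstar : ℝ → ℝ)
    (hvstar : ∀ uc ∈ Set.Ioo (0:ℝ) 1, 0 ≤ vstar uc ∧ ∃ U : ℝ → ℝ, IsPTW f uc (vstar uc) U)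
    (Um : ℝ → ℝ) (hUm : ContDiff ℝ 2 Um)
    (hode : ∀ y : ℝ, deriv (deriv Um) y + 2 * deriv Um y + f (Um y) = 0)
    (hrange : ∀ y : ℝ, 0 < Um y ∧ Um y < 1)
    (hbot : Tendsto Um atBot (𝓝 1)) (htop : Tendsto Um atTop (𝓝 0))
    (hnorm : Um 0 = 1 / 2)
    (A B : ℝ) (hA : 0 < A)
    (hAlim : Tendsto (fun y => Real.exp y * Um y / y) atTop (𝓝 A))
    (hBlim : Tendsto (fun y => Real.exp y * Um y - A * y) atTop (𝓝 B)) :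
    Tendsto
      (fun uc => (Real.log uc) ^ 3 * (vstar uc - 2 + Real.pi ^ 2 / (Real.log uc) ^ 2))
      (𝓝[>] (0:ℝ))
      (𝓝 (-2 * Real.pi ^ 2 * ((A + B) / A + Real.log A))) := by
  obtain ⟨p, hp, hpu, hΦ, hlog⟩ :=
    exists_minimal_orbit hf hUm hode hrange hbot htop hA hAlim hBlim
  have hP : ∀ c, c ∈ Set.Ioo (0 : ℝ) 1 → ∃ P, IsCutoffOrbit f (vstar c) c P := fun c hc => by
    obtain ⟨hv, U, hU⟩ := hvstar c hc
    exact exists_cutoffOrbit hf hc hv hU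
  choose! P hP using hP
  obtain ⟨hfC, hf0, -, hfd, -, hfpos, -⟩ := hf
  have hflin : Tendsto (fun u => f u / u) (𝓝[>] 0) (𝓝 1) := by
    have h1 : HasDerivAt f 1 0 := by
      rw [← hfd]
      exact (hfC.differentiable one_ne_zero 0).hasDerivAt
    have h2 := h1.tendsto_slope_zero_right
    simpa [hf0, div_eq_inv_mul] using h2
  obtain ⟨hv2, hvlt, hphase⟩ := tendsto_log_add_phase
    (fun u hu => (hfpos u hu.1 hu.2).1.le) (fun u hu => (hfpos u hu.1 hu.2).2) hflin hp hpu hΦ hlog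
    (fun c hc => (hvstar c hc).1) hP
  have hL : Tendsto (fun c : ℝ => -log c) (𝓝[>] 0) atTop :=
    tendsto_neg_atBot_atTop.comp tendsto_log_nhdsGT_zero
  have hK : -(B / A) - log A - 1 = -((A + B) / A + log A) := by
    field_simp
    ring
  rw [hK] at hphase
  have h01 : ∀ᶠ c in 𝓝[>] (0 : ℝ), c ∈ Set.Ioo (0 : ℝ) 1 := Ioo_mem_nhdsGT one_pos
  have h := tendsto_cube_of_tendsto_phase hv2 (h01.mono fun c hc => (hvstar c hc).1)
    (h01.mono fun c hc => hvlt c hc) hL hphase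
  simpa only [neg_neg] using h
end
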